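/- Let ρ^{ABCD} be a state of a quadripartite quantum system on finite-dimensional Hilbert spaces satisfying S(C|A) + S(C|BD) = 0, I(A;C|BD) = 0 and S(A|D) + S(A|BC) = 0. Then S(C|D) + S(C|BD) ≤ 0. -/

import Mathlib

open scoped BigOperators ComplexOrder

/-- Von Neumann entropy (base 2) of a matrix: for a Hermitian matrix, the Shannon
entropy of its eigenvalues; junk value `0` for non-Hermitian matrices. -/
noncomputable def vNEntropy {n : Type*} [Fintype n] [DecidableEq n] (M : Matrix n n ℂ) : ℝ :=
  if h : M.IsHermitian then -∑ i, (h.eigenvalues i) * Real.logb 2 (h.eigenvalues i) else 0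

/-- A density matrix: positive semidefinite with trace one. -/
def IsState {n : Type*} [Fintype n] [DecidableEq n] (M : Matrix n n ℂ) : Prop :=
  M.PosSemidef ∧ M.trace = 1

section Quad

variable {A B C D : Type*} [Fintype A] [DecidableEq A] [Fintype B] [DecidableEq B]
  [Fintype C] [DecidableEq C] [Fintype D] [DecidableEq D]
  (ρ : Matrix (A × B × C × D) (A × B × C × D) ℂ)

/-- Entropies of the 15 marginals of a quadripartite state. -/
noncomputable def SA : ℝ :=
  vNEntropy (Matrix.of fun a a' : A => ∑ b, ∑ c, ∑ d, ρ (a, b, c, d) (a', b, c, d))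
noncomputable def SB : ℝ :=
  vNEntropy (Matrix.of fun b b' : B => ∑ a, ∑ c, ∑ d, ρ (a, b, c, d) (a, b', c, d))
noncomputable def SC : ℝ :=
  vNEntropy (Matrix.of fun c c' : C => ∑ a, ∑ b, ∑ d, ρ (a, b, c, d) (a, b, c', d))
noncomputable def SD : ℝ :=
  vNEntropy (Matrix.of fun d d' : D => ∑ a, ∑ b, ∑ c, ρ (a, b, c, d) (a, b, c, d'))
noncomputable def SAB : ℝ :=
  vNEntropy (Matrix.of fun p q : A × B => ∑ c, ∑ d, ρ (p.1, p.2, c, d) (q.1, q.2, c, d))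
noncomputable def SAC : ℝ :=
  vNEntropy (Matrix.of fun p q : A × C => ∑ b, ∑ d, ρ (p.1, b, p.2, d) (q.1, b, q.2, d))
noncomputable def SAD : ℝ :=
  vNEntropy (Matrix.of fun p q : A × D => ∑ b, ∑ c, ρ (p.1, b, c, p.2) (q.1, b, c, q.2))
noncomputable def SBC : ℝ :=
  vNEntropy (Matrix.of fun p q : B × C => ∑ a, ∑ d, ρ (a, p.1, p.2, d) (a, q.1, q.2, d))
noncomputable def SBD : ℝ :=
  vNEntropy (Matrix.of fun p q : B × D => ∑ a, ∑ c, ρ (a, p.1, c, p.2) (a, q.1, c, q.2))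
noncomputable def SCD : ℝ :=
  vNEntropy (Matrix.of fun p q : C × D => ∑ a, ∑ b, ρ (a, b, p.1, p.2) (a, b, q.1, q.2))
noncomputable def SABC : ℝ :=
  vNEntropy (Matrix.of fun p q : A × B × C =>
    ∑ d, ρ (p.1, p.2.1, p.2.2, d) (q.1, q.2.1, q.2.2, d))
noncomputable def SABD : ℝ :=
  vNEntropy (Matrix.of fun p q : A × B × D =>
    ∑ c, ρ (p.1, p.2.1, c, p.2.2) (q.1, q.2.1, c, q.2.2))
noncomputable def SACD : ℝ :=
  vNEntropy (Matrix.of fun p q : A × C × D =>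
    ∑ b, ρ (p.1, b, p.2.1, p.2.2) (q.1, b, q.2.1, q.2.2))
noncomputable def SBCD : ℝ :=
  vNEntropy (Matrix.of fun p q : B × C × D =>
    ∑ a, ρ (a, p.1, p.2.1, p.2.2) (a, q.1, q.2.1, q.2.2))
noncomputable def SABCD : ℝ := vNEntropy ρ

end Quad

/-!
Purify the state by a system `E`. By duality of entropies in pure states the three hypotheses say
that `C - A - E`, `C - E - A` and `A - D - E` are Markov chains (strong subadditivity is
saturated), and the claim becomes `S(C|D) ≤ S(C|AE)`.

Equality in strong subadditivity is equality in the monotonicity of relative entropy. Comparing the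
interpolations `T ↦ -Tr ρ log(L_ρ + T R_σ) 1` of a pair of states and of its marginals, whose
derivatives differ by the norm of an orthogonal projection, turns it into an operator identity.
For `C - A - E` and `C - E - A` this gives `ρ_AEC = a ρ_AE` with a positive operator `a` on `AC`
which commutes with `ρ_AE` and whose blocks over `C` commute with each other, because each of them
acts on `ρ_AE` like an operator on `E`; hence `S(C|AE) = -Tr ρ_AC log a`. For `A - D - E` it shows
that the blocks of `a` act on `ρ_AD` like operators on `D`. So `a` is moved to a positive operator
`t` on `DC` which commutes with `ρ_D` and has the same moments, `Tr ρ_DC f(t) = Tr ρ_AC f(a)`.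
Klein's inequality for `ρ_DC` and `t ρ_D` then gives `S(C|D) ≤ -Tr ρ_DC log t = S(C|AE)`.
-/

namespace QuantumInfo

open Matrix Polynomial Filter Topology
open scoped MatrixOrder

/-! ### Functional calculus of Hermitian matrices -/

section FunctionalCalculus

variable {n m : Type*} [Fintype n] [DecidableEq n] [Fintype m] [DecidableEq m]
  {M N : Matrix n n ℂ}

theorem continuousOn_real_spectrum (f : ℝ → ℝ) (M : Matrix n n ℂ) :
    ContinuousOn f (spectrum ℝ M) :=
  finite_real_spectrum.continuousOn f

theorem isHermitian_cfc (f : ℝ → ℝ) (M : Matrix n n ℂ) : (cfc f M).IsHermitian :=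
  cfc_predicate f M

theorem cfc_mul_cfc (f g : ℝ → ℝ) (M : Matrix n n ℂ) :
    cfc f M * cfc g M = cfc (fun x => f x * g x) M :=
  (cfc_mul f g M (continuousOn_real_spectrum f M) (continuousOn_real_spectrum g M)).symm

theorem mul_cfc (hM : M.IsHermitian) (f : ℝ → ℝ) : M * cfc f M = cfc (fun x => x * f x) M := by
  rw [← cfc_mul_cfc, cfc_id' ℝ M hM.isSelfAdjoint]

theorem commute_cfc (hM : M.IsHermitian) (h : Commute M N) (f : ℝ → ℝ) : Commute (cfc f M) N :=
  hM.isSelfAdjoint.commute_cfc h f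

theorem posSemidef_cfc {f : ℝ → ℝ} (hf : ∀ x ∈ spectrum ℝ M, 0 ≤ f x) :
    (cfc f M).PosSemidef :=
  nonneg_iff_posSemidef.mp (cfc_nonneg hf)

theorem nonneg_of_mem_spectrum (hM : M.PosSemidef) {x : ℝ} (hx : x ∈ spectrum ℝ M) : 0 ≤ x :=
  spectrum_nonneg_of_nonneg (nonneg_iff_posSemidef.mpr hM) hx

theorem exists_polynomial_cfc_eq_aeval {N : Matrix m m ℂ} (hM : M.IsHermitian)
    (hN : N.IsHermitian) (f : ℝ → ℝ) :
    ∃ F : ℝ[X], cfc f M = aeval M F ∧ cfc f N = aeval N F := by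
  classical
  set s : Finset ℝ := (finite_real_spectrum (A := M)).toFinset ∪
    (finite_real_spectrum (A := N)).toFinset with hs
  have heval : ∀ x ∈ s, f x = (Lagrange.interpolate s id f).eval x := fun x hx =>
    (Lagrange.eval_interpolate_at_node (v := id) f Function.injective_id.injOn hx).symm
  refine ⟨Lagrange.interpolate s id f, ?_, ?_⟩
  · rw [← cfc_polynomial _ M hM.isSelfAdjoint]
    exact cfc_congr fun x hx => heval x (by simp [hs, hx])
  · rw [← cfc_polynomial _ N hN.isSelfAdjoint]
    exact cfc_congr fun x hx => heval x (by simp [hs, hx])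

end FunctionalCalculus

section PosSemidef

variable {n m : Type*} [Fintype n] [Fintype m] {M N : Matrix n n ℂ}

theorem posSemidef_mul_of_commute (hM : M.PosSemidef) (hN : N.PosSemidef) (h : Commute M N) :
    (M * N).PosSemidef := by
  classical
  exact nonneg_iff_posSemidef.mp
    (h.mul_nonneg (nonneg_iff_posSemidef.mpr hM) (nonneg_iff_posSemidef.mpr hN))

theorem mul_eq_zero_of_trace_conjTranspose_mul_mul {Z : Matrix n m ℂ} (hM : M.PosSemidef)
    (h : trace (Zᴴ * M * Z) = 0) : M * Z = 0 := by
  classical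
  obtain ⟨K, rfl⟩ := CStarAlgebra.nonneg_iff_eq_star_mul_self.mp (nonneg_iff_posSemidef.mpr hM)
  have hKZ : (K * Z)ᴴ * (K * Z) = Zᴴ * (star K * K) * Z := by
    simp only [conjTranspose_mul, star_eq_conjTranspose, Matrix.mul_assoc]
  rw [← hKZ, trace_conjTranspose_mul_self_eq_zero_iff] at h
  rw [Matrix.mul_assoc, h, Matrix.mul_zero]

theorem mul_eq_zero_of_trace_mul_mul_conjTranspose {Z : Matrix m n ℂ} (hM : M.PosSemidef)
    (h : trace (Z * M * Zᴴ) = 0) : Z * M = 0 := by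
  have hMZ : M * Zᴴ = 0 := mul_eq_zero_of_trace_conjTranspose_mul_mul hM (by simpa using h)
  simpa [hM.isHermitian.eq] using congrArg conjTranspose hMZ

theorem re_trace_nonneg (hM : M.PosSemidef) : 0 ≤ (trace M).re :=
  (Complex.nonneg_iff.mp hM.trace_nonneg).1

theorem trace_mul_nonneg (hM : M.PosSemidef) (hN : N.PosSemidef) : 0 ≤ trace (M * N) := by
  classical
  obtain ⟨K, rfl⟩ := CStarAlgebra.nonneg_iff_eq_star_mul_self.mp (nonneg_iff_posSemidef.mpr hM)
  rw [mul_assoc, trace_mul_comm, star_eq_conjTranspose]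
  exact (hN.mul_mul_conjTranspose_same K).trace_nonneg

theorem re_trace_mul_nonneg (hM : M.PosSemidef) (hN : N.PosSemidef) :
    0 ≤ (trace (M * N)).re :=
  (Complex.nonneg_iff.mp (trace_mul_nonneg hM hN)).1

theorem trace_eq_zero_of_re_trace_eq_zero (hM : M.PosSemidef) (h : (trace M).re = 0) :
    trace M = 0 :=
  Complex.ext h (Complex.nonneg_iff.mp hM.trace_nonneg).2.symm

end PosSemidef

section StarAlgHom

variable {n m : Type*} [Fintype n] [DecidableEq n] [Fintype m] [DecidableEq m]
  (ι : Matrix m m ℂ →⋆ₐ[ℂ] Matrix n n ℂ) {M : Matrix m m ℂ}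

theorem map_conjTranspose (M : Matrix m m ℂ) : ι Mᴴ = (ι M)ᴴ :=
  map_star ι M

theorem continuous_starAlgHom : Continuous ι :=
  LinearMap.continuous_of_finiteDimensional ι.toAlgHom.toLinearMap

theorem isHermitian_map (hM : M.IsHermitian) : (ι M).IsHermitian := by
  rw [IsHermitian, ← map_conjTranspose, hM.eq]

theorem map_cfc (hM : M.IsHermitian) (f : ℝ → ℝ) : ι (cfc f M) = cfc f (ι M) :=
  StarAlgHomClass.map_cfc (S := ℂ) ι f M (continuousOn_real_spectrum f M)
    (continuous_starAlgHom ι) hM.isSelfAdjoint (isHermitian_map ι hM).isSelfAdjoint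

theorem posSemidef_map (hM : M.PosSemidef) : (ι M).PosSemidef := by
  obtain ⟨K, rfl⟩ := CStarAlgebra.nonneg_iff_eq_star_mul_self.mp (nonneg_iff_posSemidef.mpr hM)
  rw [map_mul, map_star]
  exact posSemidef_conjTranspose_mul_self _

end StarAlgHom

/-! ### Supports -/

section Support

variable {n m : Type*} [Fintype n] [DecidableEq n] [Fintype m] [DecidableEq m]
  {M N : Matrix n n ℂ}

/-- The Moore–Penrose inverse of a Hermitian matrix. -/
noncomputable def pinv (M : Matrix n n ℂ) : Matrix n n ℂ :=
  cfc (fun x : ℝ => x⁻¹) M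

/-- The orthogonal projection onto the range of a Hermitian matrix. The condition
`N * supportProj M = N` expresses that the support of `N` is contained in that of `M`. -/
noncomputable def supportProj (M : Matrix n n ℂ) : Matrix n n ℂ :=
  cfc (fun x : ℝ => if x = 0 then 0 else 1) M

theorem isHermitian_supportProj (M : Matrix n n ℂ) : (supportProj M).IsHermitian :=
  isHermitian_cfc _ M

theorem posSemidef_pinv (hM : M.PosSemidef) : (pinv M).PosSemidef :=
  posSemidef_cfc fun _ hx => inv_nonneg.mpr (nonneg_of_mem_spectrum hM hx)

theorem mul_pinv (hM : M.IsHermitian) : M * pinv M = supportProj M := by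
  rw [pinv, mul_cfc hM, supportProj]
  refine cfc_congr fun x _ => ?_
  by_cases hx : x = 0 <;> simp [hx]

theorem pinv_mul (hM : M.IsHermitian) : pinv M * M = supportProj M :=
  (commute_cfc hM (Commute.refl M) _).eq.trans (mul_pinv hM)

theorem pinv_mul_supportProj (M : Matrix n n ℂ) : pinv M * supportProj M = pinv M := by
  rw [pinv, supportProj, cfc_mul_cfc]
  refine cfc_congr fun x _ => ?_
  by_cases hx : x = 0 <;> simp [hx]

theorem mul_supportProj_self (hM : M.IsHermitian) : M * supportProj M = M := by
  rw [supportProj, mul_cfc hM]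
  conv_rhs => rw [← cfc_id' ℝ M hM.isSelfAdjoint]
  refine cfc_congr fun x _ => ?_
  by_cases hx : x = 0 <;> simp [hx]

theorem supportProj_mul_self (hM : M.IsHermitian) : supportProj M * M = M :=
  (commute_cfc hM (Commute.refl M) _).eq.trans (mul_supportProj_self hM)

theorem map_pinv (ι : Matrix m m ℂ →⋆ₐ[ℂ] Matrix n n ℂ) {M : Matrix m m ℂ}
    (hM : M.IsHermitian) : ι (pinv M) = pinv (ι M) :=
  map_cfc ι hM _

theorem map_supportProj (ι : Matrix m m ℂ →⋆ₐ[ℂ] Matrix n n ℂ) {M : Matrix m m ℂ}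
    (hM : M.IsHermitian) : ι (supportProj M) = supportProj (ι M) :=
  map_cfc ι hM _

end Support

/-! ### Entropy -/

section Entropy

variable {n m : Type*} [Fintype n] [DecidableEq n] [Fintype m] [DecidableEq m]
  {M : Matrix n n ℂ}

/-- The von Neumann entropy in natural units, `-Tr M log M`. -/
noncomputable def entropy (M : Matrix n n ℂ) : ℝ :=
  -(trace (M * cfc Real.log M)).re

theorem trace_cfc (hM : M.IsHermitian) (f : ℝ → ℝ) :
    trace (cfc f M) = ((∑ i, f (hM.eigenvalues i) : ℝ) : ℂ) := by
  rw [hM.cfc_eq, IsHermitian.cfc, Unitary.conjStarAlgAut_apply, trace_mul_cycle,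
    Unitary.coe_star_mul_self, one_mul, trace_diagonal]
  simp

theorem vNEntropy_eq_entropy_div_log_two (hM : M.IsHermitian) :
    vNEntropy M = entropy M / Real.log 2 := by
  rw [vNEntropy, dif_pos hM, entropy, mul_cfc hM, trace_cfc hM, Complex.ofReal_re, neg_div,
    Finset.sum_div]
  simp only [Real.logb, mul_div_assoc]

theorem vNEntropy_eq_sum_roots_charpoly (hM : M.IsHermitian) :
    vNEntropy M = (M.charpoly.roots.map fun z : ℂ => -(z.re * Real.logb 2 z.re)).sum := by
  rw [vNEntropy, dif_pos hM, hM.roots_charpoly_eq_eigenvalues, Multiset.map_map]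
  simp

theorem vNEntropy_transpose (hM : M.IsHermitian) : vNEntropy Mᵀ = vNEntropy M := by
  rw [vNEntropy_eq_sum_roots_charpoly hM, vNEntropy_eq_sum_roots_charpoly hM.transpose,
    charpoly_transpose]

theorem vNEntropy_submatrix (e : m ≃ n) (hM : M.IsHermitian) :
    vNEntropy (M.submatrix e e) = vNEntropy M := by
  rw [vNEntropy_eq_sum_roots_charpoly hM, vNEntropy_eq_sum_roots_charpoly (hM.submatrix e),
    ← charpoly_reindex e.symm M]
  rfl

theorem vNEntropy_mul_conjTranspose_of_card_le (K : Matrix m n ℂ)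
    (h : Fintype.card n ≤ Fintype.card m) : vNEntropy (K * Kᴴ) = vNEntropy (Kᴴ * K) := by
  rw [vNEntropy_eq_sum_roots_charpoly (isHermitian_mul_conjTranspose_self K),
    vNEntropy_eq_sum_roots_charpoly (isHermitian_conjTranspose_mul_self K),
    charpoly_mul_comm_of_le K Kᴴ h, Polynomial.roots_mul, Polynomial.roots_X_pow]
  · simp [Multiset.map_nsmul, Multiset.sum_nsmul]
  · exact mul_ne_zero (pow_ne_zero _ X_ne_zero) (charpoly_monic _).ne_zero

theorem vNEntropy_mul_conjTranspose (K : Matrix m n ℂ) :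
    vNEntropy (K * Kᴴ) = vNEntropy (Kᴴ * K) := by
  rcases le_total (Fintype.card n) (Fintype.card m) with h | h
  · exact vNEntropy_mul_conjTranspose_of_card_le K h
  · simpa using (vNEntropy_mul_conjTranspose_of_card_le Kᴴ h).symm

end Entropy

/-! ### Two-variable functional calculus -/

section SpectralProj

variable {n : Type*} [Fintype n] [DecidableEq n] {M : Matrix n n ℂ}

/-- The orthogonal projection onto the eigenspace of `M` at `x`, zero off the spectrum. -/
noncomputable def spectralProj (M : Matrix n n ℂ) (x : ℝ) : Matrix n n ℂ :=
  cfc (fun t : ℝ => if t = x then 1 else 0) M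

theorem posSemidef_spectralProj (M : Matrix n n ℂ) (x : ℝ) : (spectralProj M x).PosSemidef :=
  posSemidef_cfc fun t _ => by split_ifs <;> norm_num

theorem spectralProj_mul_cfc (M : Matrix n n ℂ) (x : ℝ) (f : ℝ → ℝ) :
    spectralProj M x * cfc f M = f x • spectralProj M x := by
  rw [spectralProj, cfc_mul_cfc, ← cfc_smul (f x) _ M (continuousOn_real_spectrum _ M)]
  refine cfc_congr fun t _ => ?_
  by_cases h : t = x <;> simp [h]

theorem cfc_mul_spectralProj (M : Matrix n n ℂ) (x : ℝ) (f : ℝ → ℝ) :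
    cfc f M * spectralProj M x = f x • spectralProj M x :=
  (cfc_commute_cfc _ _ M).eq.trans (spectralProj_mul_cfc M x f)

theorem cfc_eq_sum_spectralProj (M : Matrix n n ℂ) (f : ℝ → ℝ) :
    cfc f M = ∑ x ∈ (finite_real_spectrum (A := M)).toFinset, f x • spectralProj M x := by
  have hsmul : ∀ x, f x • spectralProj M x = cfc (fun t => f x • if t = x then 1 else 0) M :=
    fun x => (cfc_smul (f x) _ M (continuousOn_real_spectrum _ M)).symm
  simp only [hsmul]
  rw [← cfc_sum _ M _ fun x _ => continuousOn_real_spectrum _ M]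
  refine cfc_congr fun t ht => ?_
  simp [Finset.sum_apply, ht]

end SpectralProj

section BiCfc

variable {n : Type*} [Fintype n] [DecidableEq n] {ρ σ : Matrix n n ℂ} {f g : ℝ → ℝ → ℝ}

/-- The joint spectrum of left multiplication by `ρ` and right multiplication by `σ`, for
Hermitian `ρ` and `σ`. -/
noncomputable def jointSpectrum (ρ σ : Matrix n n ℂ) : Finset (ℝ × ℝ) :=
  open Classical in
  {z ∈ (finite_real_spectrum (A := ρ)).toFinset ×ˢ (finite_real_spectrum (A := σ)).toFinset |
    spectralProj ρ z.1 * spectralProj σ z.2 ≠ 0}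

/-- The two-variable functional calculus `f(L_ρ, R_σ) 1`, where `L_ρ` is left multiplication by
`ρ` and `R_σ` is right multiplication by `σ`. -/
noncomputable def biCfc (f : ℝ → ℝ → ℝ) (ρ σ : Matrix n n ℂ) : Matrix n n ℂ :=
  ∑ z ∈ jointSpectrum ρ σ, f z.1 z.2 • (spectralProj ρ z.1 * spectralProj σ z.2)

theorem fst_mem_spectrum {z : ℝ × ℝ} (hz : z ∈ jointSpectrum ρ σ) : z.1 ∈ spectrum ℝ ρ := by
  simp only [jointSpectrum, Finset.mem_filter, Finset.mem_product, Set.Finite.mem_toFinset] at hz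
  exact hz.1.1

theorem snd_mem_spectrum {z : ℝ × ℝ} (hz : z ∈ jointSpectrum ρ σ) : z.2 ∈ spectrum ℝ σ := by
  simp only [jointSpectrum, Finset.mem_filter, Finset.mem_product, Set.Finite.mem_toFinset] at hz
  exact hz.1.2

theorem spectralProj_mul_spectralProj_ne_zero {z : ℝ × ℝ} (hz : z ∈ jointSpectrum ρ σ) :
    spectralProj ρ z.1 * spectralProj σ z.2 ≠ 0 :=
  (Finset.mem_filter.mp hz).2

theorem fst_eq_zero_of_snd_eq_zero (hρ : ρ.IsHermitian) (hs : ρ * supportProj σ = ρ) {z : ℝ × ℝ}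
    (hz : z ∈ jointSpectrum ρ σ) (h : z.2 = 0) : z.1 = 0 := by
  have hρz : spectralProj ρ z.1 * ρ = z.1 • spectralProj ρ z.1 := by
    simpa only [cfc_id' ℝ ρ hρ.isSelfAdjoint] using spectralProj_mul_cfc ρ z.1 fun x => x
  have hσz : supportProj σ * spectralProj σ z.2 = 0 := by
    rw [supportProj, cfc_mul_spectralProj, if_pos h, zero_smul]
  have hsmul : z.1 • (spectralProj ρ z.1 * spectralProj σ z.2) = 0 := by
    rw [← smul_mul_assoc, ← hρz, ← hs, mul_assoc, mul_assoc, hσz, mul_zero, mul_zero]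
  exact (smul_eq_zero.mp hsmul).resolve_right (spectralProj_mul_spectralProj_ne_zero hz)

theorem biCfc_congr (h : ∀ z ∈ jointSpectrum ρ σ, f z.1 z.2 = g z.1 z.2) :
    biCfc f ρ σ = biCfc g ρ σ :=
  Finset.sum_congr rfl fun z hz => by rw [h z hz]

theorem biCfc_add (f g : ℝ → ℝ → ℝ) (ρ σ : Matrix n n ℂ) :
    biCfc (fun x y => f x y + g x y) ρ σ = biCfc f ρ σ + biCfc g ρ σ := by
  simp only [biCfc, add_smul, Finset.sum_add_distrib]

theorem biCfc_const_mul (c : ℝ) (f : ℝ → ℝ → ℝ) (ρ σ : Matrix n n ℂ) :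
    biCfc (fun x y => c * f x y) ρ σ = c • biCfc f ρ σ := by
  simp only [biCfc, mul_smul, Finset.smul_sum]

theorem cfc_mul_biCfc (u : ℝ → ℝ) (f : ℝ → ℝ → ℝ) (ρ σ : Matrix n n ℂ) :
    cfc u ρ * biCfc f ρ σ = biCfc (fun x y => u x * f x y) ρ σ := by
  rw [biCfc, Finset.mul_sum]
  refine Finset.sum_congr rfl fun z _ => ?_
  rw [mul_smul_comm, ← mul_assoc, cfc_mul_spectralProj, smul_mul_assoc, smul_smul, mul_comm]

theorem biCfc_mul_cfc (u : ℝ → ℝ) (f : ℝ → ℝ → ℝ) (ρ σ : Matrix n n ℂ) :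
    biCfc f ρ σ * cfc u σ = biCfc (fun x y => f x y * u y) ρ σ := by
  rw [biCfc, Finset.sum_mul]
  refine Finset.sum_congr rfl fun z _ => ?_
  rw [smul_mul_assoc, mul_assoc, spectralProj_mul_cfc, mul_smul_comm, smul_smul]

theorem cfc_mul_cfc_eq_biCfc (u v : ℝ → ℝ) (ρ σ : Matrix n n ℂ) :
    cfc u ρ * cfc v σ = biCfc (fun x y => u x * v y) ρ σ := by
  classical
  rw [cfc_eq_sum_spectralProj ρ u, cfc_eq_sum_spectralProj σ v, Finset.sum_mul_sum,
    ← Finset.sum_product', biCfc, jointSpectrum, Finset.sum_filter]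
  refine Finset.sum_congr rfl fun z _ => ?_
  by_cases hz : spectralProj ρ z.1 * spectralProj σ z.2 = 0
  · simp [hz]
  · simp [hz, smul_smul, mul_comm]

theorem mul_biCfc (hρ : ρ.IsHermitian) (f : ℝ → ℝ → ℝ) (σ : Matrix n n ℂ) :
    ρ * biCfc f ρ σ = biCfc (fun x y => x * f x y) ρ σ := by
  rw [← cfc_mul_biCfc fun x => x, cfc_id' ℝ ρ hρ.isSelfAdjoint]

theorem biCfc_mul (hσ : σ.IsHermitian) (f : ℝ → ℝ → ℝ) (ρ : Matrix n n ℂ) :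
    biCfc f ρ σ * σ = biCfc (fun x y => f x y * y) ρ σ := by
  rw [← biCfc_mul_cfc fun y => y, cfc_id' ℝ σ hσ.isSelfAdjoint]

theorem mul_cfc_eq_biCfc (hρ : ρ.IsHermitian) (v : ℝ → ℝ) (σ : Matrix n n ℂ) :
    ρ * cfc v σ = biCfc (fun x y => x * v y) ρ σ := by
  rw [← cfc_mul_cfc_eq_biCfc fun x => x, cfc_id' ℝ ρ hρ.isSelfAdjoint]

theorem biCfc_fst (hσ : σ.IsHermitian) (u : ℝ → ℝ) (ρ : Matrix n n ℂ) :
    biCfc (fun x _ => u x) ρ σ = cfc u ρ := by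
  rw [← mul_one (cfc u ρ), ← cfc_const_one ℝ σ hσ.isSelfAdjoint, cfc_mul_cfc_eq_biCfc]
  simp only [mul_one]

theorem biCfc_snd (hρ : ρ.IsHermitian) (v : ℝ → ℝ) (σ : Matrix n n ℂ) :
    biCfc (fun _ y => v y) ρ σ = cfc v σ := by
  rw [← one_mul (cfc v σ), ← cfc_const_one ℝ ρ hρ.isSelfAdjoint, cfc_mul_cfc_eq_biCfc]
  simp only [one_mul]

theorem biCfc_fst_id (hρ : ρ.IsHermitian) (hσ : σ.IsHermitian) :
    biCfc (fun x _ => x) ρ σ = ρ :=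
  (biCfc_fst hσ (fun x => x) ρ).trans (cfc_id' ℝ ρ hρ.isSelfAdjoint)

theorem biCfc_snd_id (hρ : ρ.IsHermitian) (hσ : σ.IsHermitian) :
    biCfc (fun _ y => y) ρ σ = σ :=
  (biCfc_snd hρ (fun y => y) σ).trans (cfc_id' ℝ σ hσ.isSelfAdjoint)

theorem re_trace_biCfc (f : ℝ → ℝ → ℝ) (ρ σ : Matrix n n ℂ) :
    (trace (biCfc f ρ σ)).re = ∑ z ∈ jointSpectrum ρ σ,
      f z.1 z.2 * (trace (spectralProj ρ z.1 * spectralProj σ z.2)).re := by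
  simp only [biCfc, trace_sum, Complex.re_sum, trace_smul, Complex.real_smul,
    Complex.re_ofReal_mul]

theorem re_trace_biCfc_mono (h : ∀ z ∈ jointSpectrum ρ σ, f z.1 z.2 ≤ g z.1 z.2) :
    (trace (biCfc f ρ σ)).re ≤ (trace (biCfc g ρ σ)).re := by
  rw [re_trace_biCfc, re_trace_biCfc]
  exact Finset.sum_le_sum fun z hz => mul_le_mul_of_nonneg_right (h z hz)
    (re_trace_mul_nonneg (posSemidef_spectralProj ρ z.1) (posSemidef_spectralProj σ z.2))

theorem tendsto_biCfc {l : Filter ℝ} {F : ℝ → ℝ → ℝ → ℝ}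
    (h : ∀ z ∈ jointSpectrum ρ σ, Tendsto (fun T => F T z.1 z.2) l (𝓝 (f z.1 z.2))) :
    Tendsto (fun T => biCfc (F T) ρ σ) l (𝓝 (biCfc f ρ σ)) :=
  tendsto_finsetSum _ fun z hz => (h z hz).smul_const _

theorem tendsto_re_trace_biCfc {l : Filter ℝ} {F : ℝ → ℝ → ℝ → ℝ}
    (h : ∀ z ∈ jointSpectrum ρ σ, Tendsto (fun T => F T z.1 z.2) l (𝓝 (f z.1 z.2))) :
    Tendsto (fun T => (trace (biCfc (F T) ρ σ)).re) l (𝓝 (trace (biCfc f ρ σ)).re) := by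
  simp only [re_trace_biCfc]
  exact tendsto_finsetSum _ fun z hz => (h z hz).mul_const _

theorem hasDerivAt_re_trace_biCfc {F : ℝ → ℝ → ℝ → ℝ} {T : ℝ}
    (h : ∀ z ∈ jointSpectrum ρ σ, HasDerivAt (fun t => F t z.1 z.2) (f z.1 z.2) T) :
    HasDerivAt (fun t => (trace (biCfc (F t) ρ σ)).re) (trace (biCfc f ρ σ)).re T := by
  simp only [re_trace_biCfc]
  exact HasDerivAt.fun_sum fun z hz => (h z hz).mul_const _

end BiCfc

/-! ### Marginals -/

section Marginal

variable {n m k : Type*} [Fintype n] [DecidableEq n] [Fintype m] [DecidableEq m]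
  [Fintype k] [DecidableEq k] (ι : Matrix m m ℂ →⋆ₐ[ℂ] Matrix n n ℂ) {M : Matrix n n ℂ}

/-- The marginal of `M` on the subsystem whose observables are embedded by `ι`, that is, the image
of `M` under the trace-dual of `ι`. For `ι Z = Z ⊗ 1` it is the partial trace. -/
noncomputable def marginal (M : Matrix n n ℂ) : Matrix m m ℂ :=
  of fun x y => trace (ι (single y x 1) * M)

theorem trace_map_mul (Z : Matrix m m ℂ) (M : Matrix n n ℂ) :
    trace (ι Z * M) = trace (Z * marginal ι M) := by
  have hZ : Z = ∑ x, ∑ y, Z x y • single x y (1 : ℂ) := by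
    simpa using matrix_eq_sum_single Z
  conv_lhs => rw [hZ]
  simp only [map_sum, map_smul, Finset.sum_mul, trace_sum, smul_mul_assoc, trace_smul, smul_eq_mul]
  simp only [trace, diag_apply, mul_apply, marginal, of_apply]

theorem trace_mul_map (M : Matrix n n ℂ) (Z : Matrix m m ℂ) :
    trace (M * ι Z) = trace (marginal ι M * Z) := by
  rw [trace_mul_comm, trace_map_mul, trace_mul_comm]

theorem marginal_eq_of_trace {N : Matrix m m ℂ} (h : ∀ Z, trace (ι Z * M) = trace (Z * N)) :
    marginal ι M = N :=
  ext_iff_trace_mul_left.mpr fun Z => by rw [← trace_map_mul, h]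

theorem trace_marginal (M : Matrix n n ℂ) : trace (marginal ι M) = trace M := by
  simpa using (trace_map_mul ι 1 M).symm

theorem marginal_marginal (κ : Matrix k k ℂ →⋆ₐ[ℂ] Matrix m m ℂ) (M : Matrix n n ℂ) :
    marginal κ (marginal ι M) = marginal (ι.comp κ) M :=
  (marginal_eq_of_trace _ fun Z => by
    rw [StarAlgHom.comp_apply, trace_map_mul, trace_map_mul]).symm

theorem marginal_map_mul (Z : Matrix m m ℂ) (M : Matrix n n ℂ) :
    marginal ι (ι Z * M) = Z * marginal ι M :=
  marginal_eq_of_trace ι fun W => by rw [← mul_assoc, ← map_mul, trace_map_mul, mul_assoc]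

theorem marginal_mul_map (M : Matrix n n ℂ) (Z : Matrix m m ℂ) :
    marginal ι (M * ι Z) = marginal ι M * Z :=
  marginal_eq_of_trace ι fun W => by
    rw [← mul_assoc, trace_mul_comm, ← mul_assoc, ← map_mul, trace_map_mul, mul_assoc,
      trace_mul_comm, mul_assoc]

theorem marginal_mul_comm {X : Matrix n n ℂ} (hX : ∀ Z, Commute X (ι Z)) (M : Matrix n n ℂ) :
    marginal ι (X * M) = marginal ι (M * X) :=
  marginal_eq_of_trace ι fun Z => by
    rw [← trace_map_mul, ← mul_assoc, ← mul_assoc, ← (hX Z).eq, mul_assoc, trace_mul_comm]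

theorem marginal_conjTranspose (M : Matrix n n ℂ) : marginal ι Mᴴ = (marginal ι M)ᴴ :=
  marginal_eq_of_trace ι fun Z => by
    rw [← conjTranspose_conjTranspose (ι Z), ← conjTranspose_mul, trace_conjTranspose,
      ← map_conjTranspose, trace_mul_map, ← trace_conjTranspose, conjTranspose_mul,
      conjTranspose_conjTranspose]

theorem posSemidef_marginal (hM : M.PosSemidef) : (marginal ι M).PosSemidef := by
  have hH : (marginal ι M).IsHermitian := by
    rw [IsHermitian, ← marginal_conjTranspose, hM.isHermitian.eq]
  refine posSemidef_iff_dotProduct_mulVec.mpr ⟨hH, fun v => ?_⟩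
  rw [dotProduct_mulVec, dotProduct_comm, ← trace_vecMulVec, ← vecMulVec_mul, ← trace_map_mul]
  exact trace_mul_nonneg (posSemidef_map ι (posSemidef_vecMulVec_self_star v)) hM

variable {X Z : Matrix n n ℂ} {Y : Matrix m m ℂ}

theorem map_mul_eq_zero_of_mul_marginal_eq_zero (hM : M.PosSemidef) (h : Y * marginal ι M = 0) :
    ι Y * M = 0 := by
  refine mul_eq_zero_of_trace_mul_mul_conjTranspose hM ?_
  rw [trace_mul_cycle, ← map_conjTranspose, ← map_mul, trace_map_mul, mul_assoc, h, mul_zero,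
    trace_zero]

theorem mul_map_eq_zero_of_marginal_mul_eq_zero (hM : M.PosSemidef) (h : marginal ι M * Y = 0) :
    M * ι Y = 0 := by
  refine mul_eq_zero_of_trace_conjTranspose_mul_mul hM ?_
  rw [mul_assoc, trace_mul_comm, mul_assoc, ← map_conjTranspose, ← map_mul, trace_mul_map,
    ← mul_assoc, h, zero_mul, trace_zero]

theorem mul_map_supportProj_marginal (hM : M.PosSemidef) :
    M * ι (supportProj (marginal ι M)) = M := by
  have hzero : marginal ι M * (1 - supportProj (marginal ι M)) = 0 := by
    rw [mul_sub, mul_one, mul_supportProj_self (posSemidef_marginal ι hM).isHermitian, sub_self]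
  have := mul_map_eq_zero_of_marginal_mul_eq_zero ι hM hzero
  rwa [map_sub, map_one, mul_sub, mul_one, sub_eq_zero, eq_comm] at this

theorem map_supportProj_marginal_mul (hM : M.PosSemidef) :
    ι (supportProj (marginal ι M)) * M = M := by
  have := congrArg conjTranspose (mul_map_supportProj_marginal ι hM)
  rwa [conjTranspose_mul, hM.isHermitian.eq, ← map_conjTranspose,
    (isHermitian_supportProj _).eq] at this

theorem mul_eq_mul_of_mul_map_marginal (hM : M.PosSemidef)
    (h : X * ι (marginal ι M) = Z * ι (marginal ι M)) : X * M = Z * M := by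
  rw [← map_supportProj_marginal_mul ι hM, ← mul_pinv (posSemidef_marginal ι hM).isHermitian,
    map_mul, ← mul_assoc, ← mul_assoc, h, mul_assoc, mul_assoc, ← mul_assoc (ι _)]

end Marginal

open scoped Kronecker

/-! ### Tensor factors -/

section TensorFactor

variable {n m k : Type*} [Fintype n] [DecidableEq n] [Fintype m] [DecidableEq m]
  [Fintype k] [DecidableEq k]

/-- The embedding `Z ↦ Z ⊗ 1` of the observables of a subsystem `m`, where `e` splits the index
type `n` of the whole system into `m` and a complementary factor `k`. -/
noncomputable def factorEmb (e : n ≃ m × k) : Matrix m m ℂ →⋆ₐ[ℂ] Matrix n n ℂ where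
  toFun Z := (Z ⊗ₖ (1 : Matrix k k ℂ)).submatrix e e
  map_one' := by simp
  map_mul' X Y := by rw [submatrix_mul_equiv, ← mul_kronecker_mul, one_mul]
  map_zero' := by simp
  map_add' X Y := by rw [add_kronecker]; rfl
  commutes' c := by
    rw [Algebra.algebraMap_eq_smul_one, Algebra.algebraMap_eq_smul_one, smul_kronecker,
      one_kronecker_one]
    change c • (1 : Matrix (m × k) (m × k) ℂ).submatrix e e = _
    rw [submatrix_one_equiv]
  map_star' X := by
    rw [star_eq_conjTranspose, star_eq_conjTranspose, conjTranspose_submatrix,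
      conjTranspose_kronecker, conjTranspose_one]

theorem factorEmb_apply (e : n ≃ m × k) (Z : Matrix m m ℂ) (x y : n) :
    factorEmb e Z x y = Z (e x).1 (e y).1 * (1 : Matrix k k ℂ) (e x).2 (e y).2 :=
  rfl

theorem marginal_factorEmb (e : n ≃ m × k) (M : Matrix n n ℂ) :
    marginal (factorEmb e) M = of fun x y => ∑ c, M (e.symm (x, c)) (e.symm (y, c)) := by
  refine marginal_eq_of_trace _ fun Z => ?_
  simp only [trace, diag_apply, mul_apply, factorEmb_apply, of_apply, one_apply]
  rw [← e.symm.sum_comp, Fintype.sum_prod_type]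
  refine Finset.sum_congr rfl fun x _ => ?_
  simp_rw [← e.symm.sum_comp (fun j => _ * M j _), Fintype.sum_prod_type]
  simp only [Equiv.apply_symm_apply, mul_ite, mul_one, mul_zero, ite_mul, zero_mul,
    Finset.sum_ite_eq, Finset.mem_univ, if_true, Finset.mul_sum]
  exact Finset.sum_comm

theorem marginal_factorEmb_apply (e : n ≃ m × k) (M : Matrix n n ℂ) (x y : m) :
    marginal (factorEmb e) M x y = ∑ c, M (e.symm (x, c)) (e.symm (y, c)) := by
  rw [marginal_factorEmb, of_apply]

theorem commute_factorEmb (e : n ≃ m × k) (Z : Matrix m m ℂ) (W : Matrix k k ℂ) :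
    Commute (factorEmb e Z) (factorEmb (e.trans (Equiv.prodComm m k)) W) := by
  have hW : factorEmb (e.trans (Equiv.prodComm m k)) W =
      ((1 : Matrix m m ℂ) ⊗ₖ W).submatrix e e := by
    ext x y
    exact mul_comm _ _
  have hZ : factorEmb e Z = (Z ⊗ₖ (1 : Matrix k k ℂ)).submatrix e e := rfl
  rw [Commute, SemiconjBy, hW, hZ, submatrix_mul_equiv, submatrix_mul_equiv, ← mul_kronecker_mul,
    ← mul_kronecker_mul, one_mul, mul_one, one_mul, mul_one]

end TensorFactor

/-! ### Interpolation between entropy and cross entropy -/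

section Scalar

variable {p q T : ℝ}

theorem hasDerivAt_neg_mul_log_add_mul (hp : 0 ≤ p) (hq : 0 ≤ q) (hT : 0 < T) :
    HasDerivAt (fun t => -(p * Real.log (p + t * q))) (T⁻¹ * (p * (p / (p + T * q)) + -1 * p))
      T := by
  rcases hp.eq_or_lt with rfl | hp
  · simpa using hasDerivAt_const T (0 : ℝ)
  · have hpos : 0 < p + T * q := by positivity
    have haffine : HasDerivAt (fun t => p + t * q) q T := by
      simpa using ((hasDerivAt_id T).mul_const q).const_add p
    refine ((haffine.log hpos.ne').const_mul p).neg.congr_deriv ?_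
    field_simp
    ring

theorem tendsto_neg_mul_log_add_mul_zero :
    Tendsto (fun t => -(p * Real.log (p + t * q))) (𝓝[>] 0) (𝓝 (-(p * Real.log p))) := by
  rcases eq_or_ne p 0 with rfl | hp
  · simp
  · have hcont : ContinuousAt (fun t : ℝ => -(p * Real.log (p + t * q))) 0 :=
      ((ContinuousAt.log (by fun_prop) (by simpa using hp)).const_mul p).neg
    simpa using hcont.tendsto.mono_left (nhdsWithin_le_nhds (s := Set.Ioi 0))

/-- The condition `q = 0 → p = 0` excludes the case where the limit is infinite while the
convention `log 0 = 0` makes the right-hand side finite. -/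
theorem tendsto_neg_mul_log_add_mul_atTop (hp : 0 ≤ p) (hq : 0 ≤ q) (hpq : q = 0 → p = 0) :
    Tendsto (fun t => -(p * Real.log (p + t * q)) + p * Real.log t) atTop
      (𝓝 (-(p * Real.log q))) := by
  rcases eq_or_ne p 0 with rfl | hp0
  · simp
  have hq0 : 0 < q := hq.lt_of_ne fun h => hp0 (hpq h.symm)
  have hlim : Tendsto (fun t : ℝ => -(p * Real.log (p * t⁻¹ + q))) atTop
      (𝓝 (-(p * Real.log (p * 0 + q)))) :=
    ((((tendsto_inv_atTop_zero.const_mul p).add_const q).log (by simpa using hq0.ne')).const_mul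
      p).neg
  rw [mul_zero, zero_add] at hlim
  refine hlim.congr' ?_
  filter_upwards [eventually_gt_atTop 0] with t ht
  have hfactor : p * t⁻¹ + q = (p + t * q) / t := by field_simp
  rw [hfactor, Real.log_div (by positivity) ht.ne']
  ring

theorem tendsto_div_add_mul_zero :
    Tendsto (fun t => p / (p + t * q)) (𝓝[>] 0) (𝓝 (if p = 0 then 0 else 1)) := by
  rcases eq_or_ne p 0 with rfl | hp
  · simp
  · have hcont : ContinuousAt (fun t : ℝ => p / (p + t * q)) 0 :=
      ContinuousAt.div (by fun_prop) (by fun_prop) (by simpa using hp)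
    simpa [hp] using hcont.tendsto.mono_left (nhdsWithin_le_nhds (s := Set.Ioi 0))

theorem tendsto_mul_div_add_mul_atTop (hpq : q = 0 → p = 0) :
    Tendsto (fun t => t * (p / (p + t * q))) atTop (𝓝 (p * q⁻¹)) := by
  rcases eq_or_ne q 0 with hq | hq
  · simp [hpq hq]
  have hlim : Tendsto (fun t : ℝ => p / (p * t⁻¹ + q)) atTop (𝓝 (p / (p * 0 + q))) :=
    tendsto_const_nhds.div ((tendsto_inv_atTop_zero.const_mul p).add_const q) (by simpa using hq)
  rw [mul_zero, zero_add, div_eq_mul_inv] at hlim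
  refine hlim.congr' ?_
  filter_upwards [eventually_gt_atTop 0] with t ht
  have hfactor : p * t⁻¹ + q = (p + t * q) / t := by field_simp
  rw [hfactor, div_div_eq_mul_div, mul_div_assoc, mul_comm p, div_mul_eq_mul_div, mul_div_assoc]

theorem eq_of_monotoneOn_Ioi_of_tendsto {H : ℝ → ℝ} {c : ℝ} (hH : MonotoneOn H (Set.Ioi 0))
    (h₀ : Tendsto H (𝓝[>] 0) (𝓝 c)) (h₁ : Tendsto H atTop (𝓝 c)) (hT : 0 < T) : H T = c := by
  apply le_antisymm
  · refine ge_of_tendsto h₁ ?_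
    filter_upwards [eventually_ge_atTop T] with t ht
    exact hH hT (hT.trans_le ht) ht
  · refine le_of_tendsto h₀ ?_
    filter_upwards [Ioo_mem_nhdsGT hT] with t ht
    exact hH ht.1 hT ht.2.le

theorem deriv_eq_zero_of_nonneg_of_tendsto {H H' : ℝ → ℝ} {c : ℝ}
    (hd : ∀ t, 0 < t → HasDerivAt H (H' t) t) (hH' : ∀ t, 0 < t → 0 ≤ H' t)
    (h₀ : Tendsto H (𝓝[>] 0) (𝓝 c)) (h₁ : Tendsto H atTop (𝓝 c)) (hT : 0 < T) : H' T = 0 := by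
  have hmono : MonotoneOn H (Set.Ioi 0) := by
    refine monotoneOn_of_deriv_nonneg (convex_Ioi 0)
      (fun t ht => (hd t ht).continuousAt.continuousWithinAt) ?_ ?_ <;> rw [interior_Ioi]
    · exact fun t ht => (hd t ht).differentiableAt.differentiableWithinAt
    · exact fun t ht => (hd t ht).deriv ▸ hH' t ht
  refine (hd T hT).unique ((hasDerivAt_const T c).congr_of_eventuallyEq ?_)
  filter_upwards [lt_mem_nhds hT] with t ht using eq_of_monotoneOn_Ioi_of_tendsto hmono h₀ h₁ ht

end Scalar

section Sylvester

variable {n : Type*} [Fintype n] {ρ σ X : Matrix n n ℂ} {T : ℝ}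

/-- The operator `L_ρ + T R_σ`. -/
noncomputable def sylvester (ρ σ : Matrix n n ℂ) (T : ℝ) (X : Matrix n n ℂ) : Matrix n n ℂ :=
  ρ * X + T • (X * σ)

theorem sylvester_sub (ρ σ : Matrix n n ℂ) (T : ℝ) (X Y : Matrix n n ℂ) :
    sylvester ρ σ T (X - Y) = sylvester ρ σ T X - sylvester ρ σ T Y := by
  simp only [sylvester, mul_sub, sub_mul, smul_sub]
  abel

theorem trace_conjTranspose_mul_sylvester_comm (hρ : ρ.IsHermitian) (hσ : σ.IsHermitian) (T : ℝ)
    (X Y : Matrix n n ℂ) :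
    trace (Xᴴ * sylvester ρ σ T Y) = star (trace (Yᴴ * sylvester ρ σ T X)) := by
  rw [← trace_conjTranspose]
  simp only [sylvester, conjTranspose_mul, conjTranspose_add, conjTranspose_smul, hρ.eq, hσ.eq,
    conjTranspose_conjTranspose, mul_add, trace_add, mul_smul_comm, trace_smul, star_trivial]
  rw [mul_assoc, ← mul_assoc Xᴴ Y, trace_mul_comm (Xᴴ * Y), mul_assoc]

theorem trace_conjTranspose_mul_sylvester (ρ σ : Matrix n n ℂ) (T : ℝ) (X : Matrix n n ℂ) :
    (trace (Xᴴ * sylvester ρ σ T X)).re =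
      (trace (Xᴴ * ρ * X)).re + T * (trace (X * σ * Xᴴ)).re := by
  simp only [sylvester, mul_add, trace_add, mul_smul_comm, trace_smul, Complex.add_re,
    Complex.real_smul, Complex.re_ofReal_mul]
  rw [mul_assoc, trace_mul_comm (X * σ)]

theorem re_trace_conjTranspose_mul_sylvester_nonneg (hρ : ρ.PosSemidef) (hσ : σ.PosSemidef)
    (hT : 0 ≤ T) (X : Matrix n n ℂ) : 0 ≤ (trace (Xᴴ * sylvester ρ σ T X)).re := by
  rw [trace_conjTranspose_mul_sylvester]
  exact add_nonneg (re_trace_nonneg (hρ.conjTranspose_mul_mul_same X))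
    (mul_nonneg hT (re_trace_nonneg (hσ.mul_mul_conjTranspose_same X)))

theorem mul_eq_zero_of_re_trace_sylvester_eq_zero (hρ : ρ.PosSemidef) (hσ : σ.PosSemidef)
    (hT : 0 < T) (h : (trace (Xᴴ * sylvester ρ σ T X)).re = 0) : ρ * X = 0 ∧ X * σ = 0 := by
  have hρX := hρ.conjTranspose_mul_mul_same X
  have hσX := hσ.mul_mul_conjTranspose_same X
  rw [trace_conjTranspose_mul_sylvester, add_eq_zero_iff_of_nonneg (re_trace_nonneg hρX)
    (mul_nonneg hT.le (re_trace_nonneg hσX)), mul_eq_zero, or_iff_right hT.ne'] at h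
  exact ⟨mul_eq_zero_of_trace_conjTranspose_mul_mul hρ
      (trace_eq_zero_of_re_trace_eq_zero hρX h.1),
    mul_eq_zero_of_trace_mul_mul_conjTranspose hσ (trace_eq_zero_of_re_trace_eq_zero hσX h.2)⟩

end Sylvester

section Interpolation

variable {n : Type*} [Fintype n] [DecidableEq n] {ρ σ : Matrix n n ℂ} {T : ℝ}

/-- The relative entropy `Tr ρ (log ρ - log σ)`, in nats. It is the usual one only when the support
of `ρ` is contained in that of `σ`, since `log 0 = 0` here. -/
noncomputable def relEntropy (ρ σ : Matrix n n ℂ) : ℝ :=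
  -entropy ρ - (trace (ρ * cfc Real.log σ)).re

/-- `-Tr ρ log(L_ρ + T R_σ) 1`, which interpolates between the entropy of `ρ` at `T = 0` and, up to
a divergent term, the cross entropy `-Tr ρ log σ` at `T = ∞`. -/
noncomputable def interpEntropy (ρ σ : Matrix n n ℂ) (T : ℝ) : ℝ :=
  (trace (biCfc (fun x y => -(x * Real.log (x + T * y))) ρ σ)).re

/-- The solution `(L_ρ + T R_σ)⁻¹ ρ` of the equation `sylvester ρ σ T X = ρ`. -/
noncomputable def sylvesterSol (ρ σ : Matrix n n ℂ) (T : ℝ) : Matrix n n ℂ :=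
  biCfc (fun x y => x / (x + T * y)) ρ σ

theorem sylvester_sylvesterSol (hρ : ρ.PosSemidef) (hσ : σ.PosSemidef) (hT : 0 < T) :
    sylvester ρ σ T (sylvesterSol ρ σ T) = ρ := by
  rw [sylvester, sylvesterSol, mul_biCfc hρ.isHermitian, biCfc_mul hσ.isHermitian,
    ← biCfc_const_mul, ← biCfc_add]
  conv_rhs => rw [← biCfc_fst_id hρ.isHermitian hσ.isHermitian]
  refine biCfc_congr fun z hz => ?_
  have hx := nonneg_of_mem_spectrum hρ (fst_mem_spectrum hz)
  have hy := mul_nonneg hT.le (nonneg_of_mem_spectrum hσ (snd_mem_spectrum hz))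
  rcases eq_or_ne (z.1 + T * z.2) 0 with h | h
  · simp [show z.1 = 0 by linarith]
  · field_simp

theorem hasDerivAt_interpEntropy (hρ : ρ.PosSemidef) (hσ : σ.PosSemidef) (hT : 0 < T) :
    HasDerivAt (interpEntropy ρ σ)
      (T⁻¹ * ((trace (ρ * sylvesterSol ρ σ T)).re - (trace ρ).re)) T := by
  refine (hasDerivAt_re_trace_biCfc (F := fun t x y => -(x * Real.log (x + t * y)))
    (f := fun x y => T⁻¹ * (x * (x / (x + T * y)) + -1 * x)) fun z hz =>
    hasDerivAt_neg_mul_log_add_mul (nonneg_of_mem_spectrum hρ (fst_mem_spectrum hz))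
      (nonneg_of_mem_spectrum hσ (snd_mem_spectrum hz)) hT).congr_deriv ?_
  rw [biCfc_const_mul, biCfc_add, biCfc_const_mul, biCfc_fst_id hρ.isHermitian hσ.isHermitian,
    sylvesterSol, mul_biCfc hρ.isHermitian]
  simp [sub_eq_add_neg, mul_add]

theorem tendsto_interpEntropy_zero (hρ : ρ.IsHermitian) (hσ : σ.IsHermitian) :
    Tendsto (interpEntropy ρ σ) (𝓝[>] 0) (𝓝 (entropy ρ)) := by
  have hent : entropy ρ = (trace (biCfc (fun x _ => -(x * Real.log x)) ρ σ)).re := by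
    simp only [neg_eq_neg_one_mul (_ * _)]
    rw [biCfc_const_mul, biCfc_fst hσ, ← mul_cfc hρ, entropy]
    simp
  rw [hent]
  exact tendsto_re_trace_biCfc fun z _ => tendsto_neg_mul_log_add_mul_zero

theorem tendsto_interpEntropy_atTop (hρ : ρ.PosSemidef) (hσ : σ.PosSemidef)
    (hs : ρ * supportProj σ = ρ) :
    Tendsto (fun T => interpEntropy ρ σ T + (trace ρ).re * Real.log T) atTop
      (𝓝 (-(trace (ρ * cfc Real.log σ)).re)) := by
  have hinterp (T : ℝ) : interpEntropy ρ σ T + (trace ρ).re * Real.log T =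
      (trace (biCfc (fun x y => -(x * Real.log (x + T * y)) + x * Real.log T) ρ σ)).re := by
    simp only [mul_comm _ (Real.log T)]
    rw [biCfc_add, biCfc_const_mul, biCfc_fst_id hρ.isHermitian hσ.isHermitian]
    simp [interpEntropy]
  have hcross : -(trace (ρ * cfc Real.log σ)).re =
      (trace (biCfc (fun x y => -(x * Real.log y)) ρ σ)).re := by
    simp only [neg_eq_neg_one_mul (_ * _)]
    rw [biCfc_const_mul, ← mul_cfc_eq_biCfc hρ.isHermitian]
    simp
  simp only [hinterp, hcross]
  exact tendsto_re_trace_biCfc fun z hz => tendsto_neg_mul_log_add_mul_atTop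
    (nonneg_of_mem_spectrum hρ (fst_mem_spectrum hz))
    (nonneg_of_mem_spectrum hσ (snd_mem_spectrum hz))
    (fst_eq_zero_of_snd_eq_zero hρ.isHermitian hs hz)

theorem tendsto_sylvesterSol_zero (hσ : σ.IsHermitian) :
    Tendsto (sylvesterSol ρ σ) (𝓝[>] 0) (𝓝 (supportProj ρ)) := by
  rw [supportProj, ← biCfc_fst hσ]
  exact tendsto_biCfc fun z _ => tendsto_div_add_mul_zero

theorem tendsto_smul_sylvesterSol_atTop (hρ : ρ.IsHermitian) (hs : ρ * supportProj σ = ρ) :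
    Tendsto (fun T : ℝ => T • sylvesterSol ρ σ T) atTop (𝓝 (ρ * pinv σ)) := by
  simp only [sylvesterSol, ← biCfc_const_mul, pinv, mul_cfc_eq_biCfc hρ]
  exact tendsto_biCfc fun z hz =>
    tendsto_mul_div_add_mul_atTop (fst_eq_zero_of_snd_eq_zero hρ hs hz)

end Interpolation

/-! ### Equality in the monotonicity of relative entropy -/

section Recovery

variable {n m : Type*} [Fintype n] [DecidableEq n] [Fintype m] [DecidableEq m]
  (ι : Matrix m m ℂ →⋆ₐ[ℂ] Matrix n n ℂ) {ρ σ X : Matrix n n ℂ} {T : ℝ}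

theorem trace_map_mul_sylvester_map (ρ σ : Matrix n n ℂ) (T : ℝ) (X Y : Matrix m m ℂ) :
    trace (ι X * sylvester ρ σ T (ι Y)) =
      trace (X * sylvester (marginal ι ρ) (marginal ι σ) T Y) := by
  simp only [sylvester, mul_add, trace_add, mul_smul_comm, trace_smul]
  rw [← mul_assoc, trace_mul_map, marginal_map_mul, mul_assoc, ← mul_assoc (ι X), ← map_mul,
    trace_map_mul, mul_assoc]

/-- The difference of the solutions of the full and of the reduced equation. -/
noncomputable def sylvesterDefect (ρ σ : Matrix n n ℂ) (T : ℝ) : Matrix n n ℂ :=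
  sylvesterSol ρ σ T - ι (sylvesterSol (marginal ι ρ) (marginal ι σ) T)

/-- The defect is orthogonal to the range of `ι` for the form `X, Y ↦ Tr Xᴴ (L_ρ + T R_σ) Y`, so
this is Pythagoras' theorem. -/
theorem re_trace_sylvesterDefect (hρ : ρ.PosSemidef) (hσ : σ.PosSemidef) (hT : 0 < T) :
    (trace ((sylvesterDefect ι ρ σ T)ᴴ * sylvester ρ σ T (sylvesterDefect ι ρ σ T))).re =
      (trace (ρ * sylvesterSol ρ σ T)).re -
        (trace (marginal ι ρ * sylvesterSol (marginal ι ρ) (marginal ι σ) T)).re := by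
  set x := sylvesterSol ρ σ T
  set x' := sylvesterSol (marginal ι ρ) (marginal ι σ) T
  have hx : sylvester ρ σ T x = ρ := sylvester_sylvesterSol hρ hσ hT
  have hx' : sylvester (marginal ι ρ) (marginal ι σ) T x' = marginal ι ρ :=
    sylvester_sylvesterSol (posSemidef_marginal ι hρ) (posSemidef_marginal ι hσ) hT
  have horth : trace ((x - ι x')ᴴ * sylvester ρ σ T (ι x')) = 0 := by
    rw [trace_conjTranspose_mul_sylvester_comm hρ.isHermitian hσ.isHermitian, sylvester_sub, hx,
      mul_sub, trace_sub, ← map_conjTranspose, trace_map_mul_sylvester_map, hx', trace_map_mul,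
      sub_self, star_zero]
  have hconj : trace ((x - ι x')ᴴ * ρ) = star (trace (ρ * x) - trace (marginal ι ρ * x')) := by
    rw [← trace_mul_map, ← trace_sub, ← mul_sub, ← trace_conjTranspose, conjTranspose_mul,
      hρ.isHermitian.eq]
  change (trace ((x - ι x')ᴴ * sylvester ρ σ T (x - ι x'))).re = _
  rw [sylvester_sub, hx, mul_sub, trace_sub, horth, sub_zero, hconj]
  simp

theorem marginal_mul_supportProj_marginal (hσ : σ.PosSemidef)
    (hs : ρ * supportProj σ = ρ) :
    marginal ι ρ * supportProj (marginal ι σ) = marginal ι ρ := by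
  rw [← marginal_mul_map]
  conv_lhs => rw [← hs, ← pinv_mul hσ.isHermitian]
  rw [← mul_assoc, mul_assoc, mul_map_supportProj_marginal ι hσ, mul_assoc,
    pinv_mul hσ.isHermitian, hs]

theorem re_trace_mul_sylvesterSol_marginal (hρ : ρ.PosSemidef) (hσ : σ.PosSemidef)
    (hs : ρ * supportProj σ = ρ)
    (hD : relEntropy (marginal ι ρ) (marginal ι σ) = relEntropy ρ σ) (hT : 0 < T) :
    (trace (ρ * sylvesterSol ρ σ T)).re =
      (trace (marginal ι ρ * sylvesterSol (marginal ι ρ) (marginal ι σ) T)).re := by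
  have hρ' := posSemidef_marginal ι hρ
  have hσ' := posSemidef_marginal ι hσ
  have hs' := marginal_mul_supportProj_marginal ι hσ hs
  suffices T⁻¹ * ((trace (ρ * sylvesterSol ρ σ T)).re -
      (trace (marginal ι ρ * sylvesterSol (marginal ι ρ) (marginal ι σ) T)).re) = 0 from
    sub_eq_zero.mp ((mul_eq_zero.mp this).resolve_left (inv_ne_zero hT.ne'))
  refine deriv_eq_zero_of_nonneg_of_tendsto
    (H := fun T => interpEntropy ρ σ T - interpEntropy (marginal ι ρ) (marginal ι σ) T)
    (c := entropy ρ - entropy (marginal ι ρ))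
    (H' := fun T => T⁻¹ * ((trace (ρ * sylvesterSol ρ σ T)).re -
      (trace (marginal ι ρ * sylvesterSol (marginal ι ρ) (marginal ι σ) T)).re))
    (fun t ht => ?_) (fun t ht => ?_) ?_ ?_ hT
  · refine ((hasDerivAt_interpEntropy hρ hσ ht).sub
      (hasDerivAt_interpEntropy hρ' hσ' ht)).congr_deriv ?_
    rw [trace_marginal]
    ring
  · rw [← re_trace_sylvesterDefect ι hρ hσ ht]
    exact mul_nonneg (inv_pos.mpr ht).le
      (re_trace_conjTranspose_mul_sylvester_nonneg hρ hσ ht.le _)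
  · exact (tendsto_interpEntropy_zero hρ.isHermitian hσ.isHermitian).sub
      (tendsto_interpEntropy_zero hρ'.isHermitian hσ'.isHermitian)
  · convert (tendsto_interpEntropy_atTop hρ hσ hs).sub (tendsto_interpEntropy_atTop hρ' hσ' hs')
      using 2
    · rw [trace_marginal]
      ring
    · rw [relEntropy, relEntropy] at hD
      linarith

theorem mul_sylvesterDefect_eq_zero (hρ : ρ.PosSemidef) (hσ : σ.PosSemidef)
    (hs : ρ * supportProj σ = ρ)
    (hD : relEntropy (marginal ι ρ) (marginal ι σ) = relEntropy ρ σ) (hT : 0 < T) :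
    ρ * sylvesterDefect ι ρ σ T = 0 ∧ sylvesterDefect ι ρ σ T * σ = 0 :=
  mul_eq_zero_of_re_trace_sylvester_eq_zero hρ hσ hT <| by
    rw [re_trace_sylvesterDefect ι hρ hσ hT, re_trace_mul_sylvesterSol_marginal ι hρ hσ hs hD hT,
      sub_self]

theorem tendsto_sylvesterDefect_zero (ρ : Matrix n n ℂ) (hσ : σ.PosSemidef) :
    Tendsto (sylvesterDefect ι ρ σ) (𝓝[>] 0)
      (𝓝 (supportProj ρ - ι (supportProj (marginal ι ρ)))) :=
  (tendsto_sylvesterSol_zero hσ.isHermitian).sub (((continuous_starAlgHom ι).tendsto _).comp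
    (tendsto_sylvesterSol_zero (posSemidef_marginal ι hσ).isHermitian))

theorem tendsto_smul_sylvesterDefect_atTop (hρ : ρ.PosSemidef) (hσ : σ.PosSemidef)
    (hs : ρ * supportProj σ = ρ) :
    Tendsto (fun T : ℝ => T • sylvesterDefect ι ρ σ T) atTop
      (𝓝 (ρ * pinv σ - ι (marginal ι ρ * pinv (marginal ι σ)))) := by
  refine ((tendsto_smul_sylvesterSol_atTop hρ.isHermitian hs).sub
    (((continuous_starAlgHom ι).tendsto _).comp (tendsto_smul_sylvesterSol_atTop
      (posSemidef_marginal ι hρ).isHermitian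
      (marginal_mul_supportProj_marginal ι hσ hs)))).congr fun T => ?_
  rw [Function.comp_apply, sylvesterDefect, smul_sub,
    ← Complex.coe_smul T (sylvesterSol (marginal ι ρ) _ _), map_smul, Complex.coe_smul]

section Equality

variable (hρ : ρ.PosSemidef) (hσ : σ.PosSemidef) (hs : ρ * supportProj σ = ρ)
  (hD : relEntropy (marginal ι ρ) (marginal ι σ) = relEntropy ρ σ)
include hρ hσ hs hD

theorem supportProj_mul_eq_of_relEntropy_eq :
    supportProj ρ * σ = ι (supportProj (marginal ι ρ)) * σ := by
  rw [← sub_eq_zero, ← sub_mul]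
  refine tendsto_nhds_unique ((tendsto_sylvesterDefect_zero ι ρ hσ).mul_const σ)
    (tendsto_const_nhds.congr' ?_)
  filter_upwards [self_mem_nhdsWithin] with T hT
  exact (mul_sylvesterDefect_eq_zero ι hρ hσ hs hD hT).2.symm

theorem mul_pinv_mul_eq_of_relEntropy_eq :
    ρ * pinv σ * σ = ι (marginal ι ρ * pinv (marginal ι σ)) * σ := by
  rw [← sub_eq_zero, ← sub_mul]
  refine tendsto_nhds_unique ((tendsto_smul_sylvesterDefect_atTop ι hρ hσ hs).mul_const σ)
    (tendsto_const_nhds.congr' ?_)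
  filter_upwards [eventually_gt_atTop 0] with T hT
  rw [smul_mul_assoc, (mul_sylvesterDefect_eq_zero ι hρ hσ hs hD hT).2, smul_zero]

theorem mul_mul_pinv_eq_of_relEntropy_eq :
    ρ * (ρ * pinv σ) = ρ * ι (marginal ι ρ * pinv (marginal ι σ)) := by
  rw [← sub_eq_zero, ← mul_sub]
  refine tendsto_nhds_unique ((tendsto_smul_sylvesterDefect_atTop ι hρ hσ hs).const_mul ρ)
    (tendsto_const_nhds.congr' ?_)
  filter_upwards [eventually_gt_atTop 0] with T hT
  rw [mul_smul_comm, (mul_sylvesterDefect_eq_zero ι hρ hσ hs hD hT).1, smul_zero]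

end Equality

end Recovery

/-! ### Commuting products and Klein's inequality -/

section CommutingProduct

variable {n : Type*} [Fintype n] [DecidableEq n] {M P Q Z : Matrix n n ℂ}

theorem spectralProj_mul_eq_smul {c : ℝ} (hM : M.IsHermitian) (h : M * Z = c • Z) (f : ℝ → ℝ)
    (x : ℝ) : f x • (spectralProj M x * Z) = f c • (spectralProj M x * Z) := by
  have hM' := spectralProj_mul_cfc M x fun t => t
  rw [cfc_id' ℝ M hM.isSelfAdjoint] at hM'
  have hzero : (x - c) • (spectralProj M x * Z) = 0 := by
    rw [sub_smul, ← smul_mul_assoc, ← hM', mul_assoc, h, mul_smul_comm, sub_self]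
  rcases smul_eq_zero.mp hzero with hx | hx
  · rw [sub_eq_zero.mp hx]
  · rw [hx, smul_zero, smul_zero]

theorem cfc_mul_of_mul_eq_smul {c : ℝ} (hM : M.IsHermitian) (h : M * Z = c • Z) (f : ℝ → ℝ) :
    cfc f M * Z = f c • Z := by
  conv_rhs => rw [← one_mul Z, ← cfc_const_one ℝ M hM.isSelfAdjoint]
  simp only [cfc_eq_sum_spectralProj M, Finset.sum_mul, Finset.smul_sum, smul_mul_assoc, one_smul,
    spectralProj_mul_eq_smul hM h f]

theorem cfc_mul_eq_biCfc (hP : P.IsHermitian) (hQ : Q.IsHermitian) (h : Commute P Q) (f : ℝ → ℝ) :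
    cfc f (P * Q) = biCfc (fun x y => f (x * y)) P Q := by
  have hPQ : (P * Q).IsHermitian := (hP.isSelfAdjoint.commute_iff hQ.isSelfAdjoint).mp h
  have hone : (1 : Matrix n n ℂ) = biCfc (fun _ _ => 1) P Q := by
    rw [biCfc_fst hQ (fun _ => 1), cfc_const_one ℝ P hP.isSelfAdjoint]
  conv_lhs => rw [← mul_one (cfc f (P * Q)), hone]
  simp only [biCfc, Finset.mul_sum, one_smul]
  refine Finset.sum_congr rfl fun z _ => cfc_mul_of_mul_eq_smul hPQ ?_ f
  have hQz : Commute Q (spectralProj P z.1) := (commute_cfc hP h _).symm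
  have hPz := cfc_mul_spectralProj P z.1 fun t => t
  have hQz' := cfc_mul_spectralProj Q z.2 fun t => t
  rw [cfc_id' ℝ P hP.isSelfAdjoint] at hPz
  rw [cfc_id' ℝ Q hQ.isSelfAdjoint] at hQz'
  rw [mul_assoc, ← mul_assoc Q, hQz.eq, mul_assoc, hQz', mul_smul_comm, mul_smul_comm,
    ← mul_assoc, hPz, smul_mul_assoc, smul_smul, mul_comm z.2]

theorem supportProj_mul (hP : P.IsHermitian) (hQ : Q.IsHermitian) (h : Commute P Q) :
    supportProj (P * Q) = supportProj P * supportProj Q := by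
  rw [supportProj, cfc_mul_eq_biCfc hP hQ h, supportProj, supportProj, cfc_mul_cfc_eq_biCfc]
  refine biCfc_congr fun z _ => ?_
  by_cases hx : z.1 = 0 <;> by_cases hy : z.2 = 0 <;> simp [hx, hy]

theorem supportProj_mul_log_mul (hP : P.IsHermitian) (hQ : Q.IsHermitian) (h : Commute P Q) :
    supportProj P * cfc Real.log (P * Q) * supportProj Q =
      supportProj P * (cfc Real.log P + cfc Real.log Q) * supportProj Q := by
  rw [cfc_mul_eq_biCfc hP hQ h, ← biCfc_fst hQ Real.log P, ← biCfc_snd hP Real.log Q, ← biCfc_add]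
  simp only [supportProj, cfc_mul_biCfc, biCfc_mul_cfc]
  refine biCfc_congr fun z _ => ?_
  by_cases hx : z.1 = 0 <;> by_cases hy : z.2 = 0 <;> simp [hx, hy, Real.log_mul]

theorem mul_log_mul (hP : P.IsHermitian) (hQ : Q.IsHermitian) (h : Commute P Q)
    (hMP : M * supportProj P = M) (hMQ : M * supportProj Q = M) :
    M * cfc Real.log (P * Q) = M * (cfc Real.log P + cfc Real.log Q) := by
  have habsorb {Y : Matrix n n ℂ} (hY : Commute Q Y) :
      M * Y = M * (supportProj P * Y * supportProj Q) := by
    have hQY : Commute (supportProj Q) Y := commute_cfc hQ hY _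
    rw [← mul_assoc, ← mul_assoc, hMP, mul_assoc, ← hQY.eq, ← mul_assoc, hMQ]
  have hPQ : (P * Q).IsHermitian := (hP.isSelfAdjoint.commute_iff hQ.isSelfAdjoint).mp h
  have hlog : Commute Q (cfc Real.log (P * Q)) :=
    (commute_cfc hPQ (h.mul_left (Commute.refl Q)) _).symm
  have hadd : Commute Q (cfc Real.log P + cfc Real.log Q) :=
    (commute_cfc hP h _).symm.add_right (commute_cfc hQ (Commute.refl Q) _).symm
  rw [habsorb hlog, supportProj_mul_log_mul hP hQ h, ← habsorb hadd]

end CommutingProduct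

section Klein

variable {n : Type*} [Fintype n] [DecidableEq n] {ρ σ : Matrix n n ℂ}

theorem sub_le_mul_log_sub_mul_log {x y : ℝ} (hx : 0 ≤ x) (hy : 0 ≤ y) (hxy : y = 0 → x = 0) :
    x - y ≤ x * Real.log x - x * Real.log y := by
  rcases hx.eq_or_lt with rfl | hx
  · simpa using hy
  have hy : 0 < y := hy.lt_of_ne fun h => hx.ne' (hxy h.symm)
  have hlog := Real.log_le_sub_one_of_pos (div_pos hy hx)
  rw [Real.log_div hy.ne' hx.ne', le_sub_iff_add_le, le_div_iff₀ hx] at hlog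
  linarith

/-- Klein's inequality. -/
theorem re_trace_sub_re_trace_le_relEntropy (hρ : ρ.PosSemidef) (hσ : σ.PosSemidef)
    (hs : ρ * supportProj σ = ρ) : (trace ρ).re - (trace σ).re ≤ relEntropy ρ σ := by
  have hmono : (trace (biCfc (fun x y => x + -1 * y) ρ σ)).re ≤
      (trace (biCfc (fun x y => x * Real.log x + -1 * (x * Real.log y)) ρ σ)).re :=
    re_trace_biCfc_mono fun z hz => by
      have := sub_le_mul_log_sub_mul_log (nonneg_of_mem_spectrum hρ (fst_mem_spectrum hz))
        (nonneg_of_mem_spectrum hσ (snd_mem_spectrum hz))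
        (fst_eq_zero_of_snd_eq_zero hρ.isHermitian hs hz)
      linarith
  rw [biCfc_add, biCfc_const_mul, biCfc_fst_id hρ.isHermitian hσ.isHermitian,
    biCfc_snd_id hρ.isHermitian hσ.isHermitian, biCfc_add, biCfc_const_mul,
    ← mul_cfc_eq_biCfc hρ.isHermitian, biCfc_fst hσ.isHermitian (fun x => x * Real.log x),
    ← mul_cfc hρ.isHermitian] at hmono
  simpa [relEntropy, entropy, sub_eq_add_neg] using hmono

end Klein

/-! ### Markov chains -/

section Markov

variable {n n₀ n₁ n₂ : Type*} [Fintype n] [DecidableEq n] [Fintype n₀] [DecidableEq n₀]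
  [Fintype n₁] [DecidableEq n₁] [Fintype n₂] [DecidableEq n₂]

/-- The conditional operator `ρ ρ_m⁻¹` of `ρ` relative to the subsystem `m` embedded by `ι`, the
inverse being taken on the support of the marginal `ρ_m`. -/
noncomputable def condOp (ι : Matrix n₀ n₀ ℂ →⋆ₐ[ℂ] Matrix n n ℂ) (ρ : Matrix n n ℂ) :
    Matrix n n ℂ :=
  ρ * ι (pinv (marginal ι ρ))

section CondOp

variable (ι : Matrix n₀ n₀ ℂ →⋆ₐ[ℂ] Matrix n n ℂ) {ρ : Matrix n n ℂ}

theorem condOp_mul_map_marginal (hρ : ρ.PosSemidef) :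
    condOp ι ρ * ι (marginal ι ρ) = ρ := by
  rw [condOp, mul_assoc, ← map_mul, pinv_mul (posSemidef_marginal ι hρ).isHermitian,
    mul_map_supportProj_marginal ι hρ]

theorem supportProj_mul_condOp (hρ : ρ.IsHermitian) :
    supportProj ρ * condOp ι ρ = condOp ι ρ := by
  rw [condOp, ← mul_assoc, supportProj_mul_self hρ]

theorem condOp_mul_map_supportProj_marginal (ρ : Matrix n n ℂ) :
    condOp ι ρ * ι (supportProj (marginal ι ρ)) = condOp ι ρ := by
  rw [condOp, mul_assoc, ← map_mul, pinv_mul_supportProj]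

theorem posSemidef_mul_map_pinv {r : Matrix n₀ n₀ ℂ} (hρ : ρ.PosSemidef) (hr : r.PosSemidef)
    (h : Commute (ι r) ρ) : (ρ * ι (pinv r)).PosSemidef := by
  refine posSemidef_mul_of_commute hρ (posSemidef_map ι (posSemidef_pinv hr)) ?_
  rw [map_pinv ι hr.isHermitian]
  exact (commute_cfc (isHermitian_map ι hr.isHermitian) h _).symm

theorem posSemidef_condOp (hρ : ρ.PosSemidef)
    (h : Commute (condOp ι ρ) (ι (marginal ι ρ))) : (condOp ι ρ).PosSemidef := by
  refine posSemidef_mul_map_pinv ι hρ (posSemidef_marginal ι hρ) ?_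
  have hcomm := h.symm.mul_right (Commute.refl (ι (marginal ι ρ)))
  rwa [condOp_mul_map_marginal ι hρ] at hcomm

theorem relEntropy_map_marginal (hρ : ρ.PosSemidef) :
    relEntropy ρ (ι (marginal ι ρ)) = entropy (marginal ι ρ) - entropy ρ := by
  rw [relEntropy, ← map_cfc ι (posSemidef_marginal ι hρ).isHermitian, trace_mul_map,
    entropy, entropy]
  ring

end CondOp

variable (ι₁ : Matrix n₁ n₁ ℂ →⋆ₐ[ℂ] Matrix n n ℂ) (ι₂ : Matrix n₂ n₂ ℂ →⋆ₐ[ℂ] Matrix n n ℂ)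
  (j : Matrix n₀ n₀ ℂ →⋆ₐ[ℂ] Matrix n₁ n₁ ℂ)

/-- Saturation of strong subadditivity `S(ρ) + S(ρ₀) ≤ S(ρ₁) + S(ρ₂)`, where the subsystems `n₁` and
`n₂` of `n` meet in `n₀`. The first equation encodes the position of the subsystems: the marginal on
`n₁` of `ρ₂ ⊗ 1` is `ρ₀ ⊗ 1`. -/
structure IsMarkov (ρ : Matrix n n ℂ) : Prop where
  posSemidef : ρ.PosSemidef
  marginal_map : marginal ι₁ (ι₂ (marginal ι₂ ρ)) = j (marginal j (marginal ι₁ ρ))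
  entropy_add : entropy ρ + entropy (marginal j (marginal ι₁ ρ)) =
    entropy (marginal ι₁ ρ) + entropy (marginal ι₂ ρ)

namespace IsMarkov

variable {ι₁ ι₂ j} {ρ : Matrix n n ℂ} (h : IsMarkov ι₁ ι₂ j ρ)
include h

theorem relEntropy_marginal_eq :
    relEntropy (marginal ι₁ ρ) (marginal ι₁ (ι₂ (marginal ι₂ ρ))) =
      relEntropy ρ (ι₂ (marginal ι₂ ρ)) := by
  rw [h.marginal_map, relEntropy_map_marginal ι₂ h.posSemidef,
    relEntropy_map_marginal j (posSemidef_marginal ι₁ h.posSemidef)]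
  linarith [h.entropy_add]

theorem mul_supportProj_map_marginal : ρ * supportProj (ι₂ (marginal ι₂ ρ)) = ρ := by
  rw [← map_supportProj ι₂ (posSemidef_marginal ι₂ h.posSemidef).isHermitian,
    mul_map_supportProj_marginal ι₂ h.posSemidef]

theorem map_condOp_marginal :
    ι₁ (condOp j (marginal ι₁ ρ)) =
      ι₁ (marginal ι₁ ρ * pinv (marginal ι₁ (ι₂ (marginal ι₂ ρ)))) := by
  rw [h.marginal_map, condOp, map_pinv j
    (posSemidef_marginal j (posSemidef_marginal ι₁ h.posSemidef)).isHermitian]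

theorem condOp_eq : condOp ι₂ ρ = ρ * pinv (ι₂ (marginal ι₂ ρ)) := by
  rw [condOp, map_pinv ι₂ (posSemidef_marginal ι₂ h.posSemidef).isHermitian]

theorem map_condOp_mul_map_marginal :
    ι₁ (condOp j (marginal ι₁ ρ)) * ι₂ (marginal ι₂ ρ) = ρ := by
  rw [h.map_condOp_marginal, ← mul_pinv_mul_eq_of_relEntropy_eq ι₁ h.posSemidef
    (posSemidef_map ι₂ (posSemidef_marginal ι₂ h.posSemidef)) h.mul_supportProj_map_marginal
    h.relEntropy_marginal_eq, ← h.condOp_eq, condOp_mul_map_marginal ι₂ h.posSemidef]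

theorem mul_map_condOp : ρ * ι₁ (condOp j (marginal ι₁ ρ)) = ρ * condOp ι₂ ρ := by
  rw [h.map_condOp_marginal, ← mul_mul_pinv_eq_of_relEntropy_eq ι₁ h.posSemidef
    (posSemidef_map ι₂ (posSemidef_marginal ι₂ h.posSemidef)) h.mul_supportProj_map_marginal
    h.relEntropy_marginal_eq, h.condOp_eq]

theorem map_supportProj_mul :
    ι₁ (supportProj (marginal ι₁ ρ)) * ι₂ (marginal ι₂ ρ) = supportProj ρ * ι₂ (marginal ι₂ ρ) :=
  (supportProj_mul_eq_of_relEntropy_eq ι₁ h.posSemidef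
    (posSemidef_map ι₂ (posSemidef_marginal ι₂ h.posSemidef)) h.mul_supportProj_map_marginal
    h.relEntropy_marginal_eq).symm

theorem mul_map_supportProj :
    ι₂ (marginal ι₂ ρ) * ι₁ (supportProj (marginal ι₁ ρ)) = ι₂ (marginal ι₂ ρ) * supportProj ρ := by
  have hadj := congrArg conjTranspose h.map_supportProj_mul
  rwa [conjTranspose_mul, conjTranspose_mul, ← map_conjTranspose, ← map_conjTranspose,
    (isHermitian_supportProj _).eq, (isHermitian_supportProj _).eq,
    (posSemidef_marginal ι₂ h.posSemidef).isHermitian.eq] at hadj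

theorem map_marginal_mul_map_condOp :
    ι₂ (marginal ι₂ ρ) * ι₁ (condOp j (marginal ι₁ ρ)) =
      ι₂ (marginal ι₂ ρ) * pinv ρ * (ρ * condOp ι₂ ρ) := by
  rw [← supportProj_mul_condOp j (posSemidef_marginal ι₁ h.posSemidef).isHermitian, map_mul,
    ← mul_assoc, h.mul_map_supportProj, ← pinv_mul h.posSemidef.isHermitian, ← h.mul_map_condOp]
  simp only [mul_assoc]

end IsMarkov

end Markov

section ActsAlike

variable {n : Type*} [Fintype n]

/-- The operators `X` and `Y` cannot be distinguished by multiplication with `r` from either side.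
The interesting case is that of operators on different subsystems. -/
structure ActsAlike (r X Y : Matrix n n ℂ) : Prop where
  mul_left : X * r = Y * r
  mul_right : r * X = r * Y

variable {r X X' Y W : Matrix n n ℂ}

/- With `Δ = X - W`, the trace of `Δᴴ r Δ` is `Tr (r X Δᴴ) - Tr (r W Δᴴ)`. Replacing `X` by `Y` in
the first term lets it pass through `Δᴴ`, and the two terms cancel. -/
theorem ActsAlike.commute_of_mul_eq_mul (h : ActsAlike r X Y) (hr : r.PosSemidef)
    (hXW : X * r = r * W) (hcomm : Commute (X - W)ᴴ Y) : Commute X r := by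
  classical
  have htrace : trace ((X - W)ᴴ * r * (X - W)) = 0 := by
    have hX : trace ((X - W)ᴴ * r * X) = trace ((X - W)ᴴ * (Y * r)) := by
      rw [mul_assoc, h.mul_right, ← mul_assoc, trace_mul_comm, ← mul_assoc, ← hcomm.eq, mul_assoc]
    rw [mul_sub, trace_sub, hX, ← h.mul_left, hXW, mul_assoc, sub_self]
  have hzero := mul_eq_zero_of_trace_conjTranspose_mul_mul hr htrace
  rw [mul_sub, sub_eq_zero] at hzero
  exact hXW.trans hzero.symm

theorem ActsAlike.mul_mul_comm (h : ActsAlike r X Y) (hY : Commute X' Y) (hr : Commute X' r) :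
    X' * X * r = X * X' * r := by
  rw [mul_assoc, h.mul_left, ← mul_assoc, hY.eq, mul_assoc, hr.eq, ← mul_assoc, ← h.mul_left,
    mul_assoc, ← hr.eq, mul_assoc]

end ActsAlike

section DoubleMarkov

variable {n n₀ n₁ n₂ n₀' n₁' : Type*} [Fintype n] [DecidableEq n] [Fintype n₀] [DecidableEq n₀]
  [Fintype n₁] [DecidableEq n₁] [Fintype n₂] [DecidableEq n₂] [Fintype n₀'] [DecidableEq n₀']
  [Fintype n₁'] [DecidableEq n₁']
  {ι₁ : Matrix n₁ n₁ ℂ →⋆ₐ[ℂ] Matrix n n ℂ} {ι₁' : Matrix n₁' n₁' ℂ →⋆ₐ[ℂ] Matrix n n ℂ}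
  {ι₂ : Matrix n₂ n₂ ℂ →⋆ₐ[ℂ] Matrix n n ℂ} {j : Matrix n₀ n₀ ℂ →⋆ₐ[ℂ] Matrix n₁ n₁ ℂ}
  {j' : Matrix n₀' n₀' ℂ →⋆ₐ[ℂ] Matrix n₁' n₁' ℂ} {ρ : Matrix n n ℂ}

theorem IsMarkov.actsAlike (h : IsMarkov ι₁ ι₂ j ρ) (h' : IsMarkov ι₁' ι₂ j' ρ) :
    ActsAlike (ι₂ (marginal ι₂ ρ)) (ι₁ (condOp j (marginal ι₁ ρ)))
      (ι₁' (condOp j' (marginal ι₁' ρ))) where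
  mul_left := h.map_condOp_mul_map_marginal.trans h'.map_condOp_mul_map_marginal.symm
  mul_right := h.map_marginal_mul_map_condOp.trans h'.map_marginal_mul_map_condOp.symm

end DoubleMarkov

/-! ### Tripartite systems -/

section Tripartite

variable {X Y Z : Type*} [Fintype X] [DecidableEq X] [Fintype Y] [DecidableEq Y]
  [Fintype Z] [DecidableEq Z]

/-- The embedding of the observables of the first factor of `X × Y`. -/
noncomputable abbrev embFst (X Y : Type*) [Fintype X] [DecidableEq X] [Fintype Y] [DecidableEq Y] :
    Matrix X X ℂ →⋆ₐ[ℂ] Matrix (X × Y) (X × Y) ℂ :=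
  factorEmb (Equiv.refl (X × Y))

/-- The embedding of the observables of the second factor of `X × Y`. -/
noncomputable abbrev embSnd (X Y : Type*) [Fintype X] [DecidableEq X] [Fintype Y] [DecidableEq Y] :
    Matrix Y Y ℂ →⋆ₐ[ℂ] Matrix (X × Y) (X × Y) ℂ :=
  factorEmb (Equiv.prodComm X Y)

/-- The splitting of `(X × Y) × Z` into `X × Z` and `Y`. -/
def split₁₃ (X Y Z : Type*) : (X × Y) × Z ≃ (X × Z) × Y where
  toFun x := ((x.1.1, x.2), x.1.2)
  invFun x := ((x.1.1, x.2), x.1.2)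
  left_inv _ := rfl
  right_inv _ := rfl

/-- The splitting of `(X × Y) × Z` into `Y × Z` and `X`. -/
def split₂₃ (X Y Z : Type*) : (X × Y) × Z ≃ (Y × Z) × X where
  toFun x := ((x.1.2, x.2), x.1.1)
  invFun x := ((x.2, x.1.1), x.1.2)
  left_inv _ := rfl
  right_inv _ := rfl

/-- The embedding of the observables of the outer factors of `(X × Y) × Z`. -/
noncomputable abbrev emb₁₃ (X Y Z : Type*) [Fintype X] [DecidableEq X] [Fintype Y] [DecidableEq Y]
    [Fintype Z] [DecidableEq Z] :
    Matrix (X × Z) (X × Z) ℂ →⋆ₐ[ℂ] Matrix ((X × Y) × Z) ((X × Y) × Z) ℂ :=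
  factorEmb (split₁₃ X Y Z)

/-- The embedding of the observables of the last two factors of `(X × Y) × Z`. -/
noncomputable abbrev emb₂₃ (X Y Z : Type*) [Fintype X] [DecidableEq X] [Fintype Y] [DecidableEq Y]
    [Fintype Z] [DecidableEq Z] :
    Matrix (Y × Z) (Y × Z) ℂ →⋆ₐ[ℂ] Matrix ((X × Y) × Z) ((X × Y) × Z) ℂ :=
  factorEmb (split₂₃ X Y Z)

theorem commute_embFst_embSnd (M : Matrix X X ℂ) (N : Matrix Y Y ℂ) :
    Commute (embFst X Y M) (embSnd X Y N) :=
  commute_factorEmb (Equiv.refl (X × Y)) M N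

theorem emb₁₃_embFst (M : Matrix X X ℂ) :
    emb₁₃ X Y Z (embFst X Z M) = embFst (X × Y) Z (embFst X Y M) := by
  ext x y
  exact mul_right_comm _ _ _

theorem emb₂₃_embFst (M : Matrix Y Y ℂ) :
    emb₂₃ X Y Z (embFst Y Z M) = embFst (X × Y) Z (embSnd X Y M) := by
  ext x y
  exact mul_right_comm _ _ _

theorem emb₁₃_embSnd (M : Matrix Z Z ℂ) :
    emb₁₃ X Y Z (embSnd X Z M) = embSnd (X × Y) Z M := by
  ext ⟨⟨x, y⟩, z⟩ ⟨⟨x', y'⟩, z'⟩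
  change M z z' * (1 : Matrix X X ℂ) x x' * (1 : Matrix Y Y ℂ) y y' =
    M z z' * (1 : Matrix (X × Y) (X × Y) ℂ) (x, y) (x', y')
  rw [← one_kronecker_one, kroneckerMap_apply, mul_assoc]

theorem emb₂₃_embSnd (M : Matrix Z Z ℂ) :
    emb₂₃ X Y Z (embSnd Y Z M) = embSnd (X × Y) Z M := by
  ext ⟨⟨x, y⟩, z⟩ ⟨⟨x', y'⟩, z'⟩
  change M z z' * (1 : Matrix Y Y ℂ) y y' * (1 : Matrix X X ℂ) x x' =
    M z z' * (1 : Matrix (X × Y) (X × Y) ℂ) (x, y) (x', y')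
  rw [← one_kronecker_one, kroneckerMap_apply, mul_assoc, mul_comm ((1 : Matrix Y Y ℂ) y y')]

theorem marginal_emb₁₃_embFst (r : Matrix (X × Y) (X × Y) ℂ) :
    marginal (emb₁₃ X Y Z) (embFst (X × Y) Z r) = embFst X Z (marginal (embFst X Y) r) := by
  ext x y
  rw [marginal_factorEmb_apply, factorEmb_apply, marginal_factorEmb_apply, Finset.sum_mul]
  rfl

theorem marginal_emb₂₃_embFst (r : Matrix (X × Y) (X × Y) ℂ) :
    marginal (emb₂₃ X Y Z) (embFst (X × Y) Z r) = embFst Y Z (marginal (embSnd X Y) r) := by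
  ext x y
  rw [marginal_factorEmb_apply, factorEmb_apply, marginal_factorEmb_apply, Finset.sum_mul]
  rfl

theorem marginal_embFst_emb₂₃ (r : Matrix (Y × Z) (Y × Z) ℂ) :
    marginal (embFst (X × Y) Z) (emb₂₃ X Y Z r) = embSnd X Y (marginal (embFst Y Z) r) := by
  ext x y
  rw [marginal_factorEmb_apply, factorEmb_apply, marginal_factorEmb_apply, Finset.sum_mul]
  rfl

variable (ρ : Matrix ((X × Y) × Z) ((X × Y) × Z) ℂ)

theorem marginal_embFst_marginal_emb₁₃ :
    marginal (embFst X Z) (marginal (emb₁₃ X Y Z) ρ) =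
      marginal (embFst X Y) (marginal (embFst (X × Y) Z) ρ) := by
  rw [marginal_marginal, marginal_marginal]
  congr 1
  exact StarAlgHom.ext emb₁₃_embFst

theorem marginal_embFst_marginal_emb₂₃ :
    marginal (embFst Y Z) (marginal (emb₂₃ X Y Z) ρ) =
      marginal (embSnd X Y) (marginal (embFst (X × Y) Z) ρ) := by
  rw [marginal_marginal, marginal_marginal]
  congr 1
  exact StarAlgHom.ext emb₂₃_embFst

end Tripartite

section Block

variable {X Y Z : Type*}

/-- The block `(1 ⊗ ⟨k|) M (1 ⊗ |l⟩)` of a matrix on `X × Z`. -/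
def block (M : Matrix (X × Z) (X × Z) ℂ) (k l : Z) : Matrix X X ℂ :=
  of fun x y => M (x, k) (y, l)

theorem ext_block {M N : Matrix (X × Z) (X × Z) ℂ} (h : ∀ k l, block M k l = block N k l) :
    M = N := by
  ext x y
  exact congrFun (congrFun (h x.2 y.2) x.1) y.1

theorem block_one [DecidableEq X] [DecidableEq Z] (k l : Z) :
    block (1 : Matrix (X × Z) (X × Z) ℂ) k l = if k = l then 1 else 0 := by
  ext x y
  rw [← one_kronecker_one]
  by_cases h : k = l <;> simp [block, h]

theorem block_mul [Fintype X] [Fintype Z] (M N : Matrix (X × Z) (X × Z) ℂ) (k l : Z) :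
    block (M * N) k l = ∑ j, block M k j * block N j l := by
  ext x y
  simp only [block, of_apply, mul_apply, Fintype.sum_prod_type, Matrix.sum_apply]
  exact Finset.sum_comm

variable [Fintype X] [DecidableEq X] [Fintype Y] [DecidableEq Y] [Fintype Z] [DecidableEq Z]

theorem block_embFst (W : Matrix X X ℂ) (k l : Z) :
    block (embFst X Z W) k l = if k = l then W else 0 := by
  ext x y
  change W x y * (1 : Matrix Z Z ℂ) k l = _
  rw [one_apply]
  split_ifs <;> simp

theorem block_mul_embFst (M : Matrix (X × Z) (X × Z) ℂ) (W : Matrix X X ℂ) (k l : Z) :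
    block (M * embFst X Z W) k l = block M k l * W := by
  simp [block_mul, block_embFst]

theorem block_embFst_mul (M : Matrix (X × Z) (X × Z) ℂ) (W : Matrix X X ℂ) (k l : Z) :
    block (embFst X Z W * M) k l = W * block M k l := by
  simp [block_mul, block_embFst]

theorem block_emb₁₃ (M : Matrix (X × Z) (X × Z) ℂ) (k l : Z) :
    block (emb₁₃ X Y Z M) k l = embFst X Y (block M k l) :=
  rfl

theorem block_emb₂₃ (M : Matrix (Y × Z) (Y × Z) ℂ) (k l : Z) :
    block (emb₂₃ X Y Z M) k l = embSnd X Y (block M k l) :=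
  rfl

theorem block_marginal_emb₂₃ (M : Matrix ((X × Y) × Z) ((X × Y) × Z) ℂ) (k l : Z) :
    block (marginal (emb₂₃ X Y Z) M) k l = marginal (embSnd X Y) (block M k l) := by
  ext x y
  rw [marginal_factorEmb_apply, block, of_apply, marginal_factorEmb_apply]
  rfl

variable {M : Matrix (X × Z) (X × Z) ℂ} {N : Matrix (Y × Z) (Y × Z) ℂ}
  {r : Matrix (X × Y) (X × Y) ℂ}

theorem emb₁₃_mul_embFst_eq_iff :
    emb₁₃ X Y Z M * embFst (X × Y) Z r = emb₂₃ X Y Z N * embFst (X × Y) Z r ↔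
      ∀ k l, embFst X Y (block M k l) * r = embSnd X Y (block N k l) * r := by
  refine ⟨fun h k l => ?_, fun h => ext_block fun k l => ?_⟩
  · simpa only [block_mul_embFst, block_emb₁₃, block_emb₂₃] using congrArg (block · k l) h
  · simpa only [block_mul_embFst, block_emb₁₃, block_emb₂₃] using h k l

theorem commute_emb₁₃_embFst_iff :
    Commute (emb₁₃ X Y Z M) (embFst (X × Y) Z r) ↔
      ∀ k l, Commute (embFst X Y (block M k l)) r := by
  refine ⟨fun h k l => ?_, fun h => ext_block fun k l => ?_⟩
  · have hkl := congrArg (block · k l) h.eq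
    rwa [block_mul_embFst, block_embFst_mul, block_emb₁₃] at hkl
  · simpa only [block_mul_embFst, block_embFst_mul, block_emb₁₃] using (h k l).eq

theorem actsAlike_block
    (h : ActsAlike (embFst (X × Y) Z r) (emb₁₃ X Y Z M) (emb₂₃ X Y Z N)) (k l : Z) :
    ActsAlike r (embFst X Y (block M k l)) (embSnd X Y (block N k l)) where
  mul_left := emb₁₃_mul_embFst_eq_iff.mp h.mul_left k l
  mul_right := by
    simpa only [block_embFst_mul, block_emb₁₃, block_emb₂₃] using
      congrArg (block · k l) h.mul_right

end Block

/-! ### Two Markov chains with the same ends -/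

section CommonEnds

variable {A E C : Type*} [Fintype A] [DecidableEq A] [Fintype E] [DecidableEq E] [Fintype C]
  [DecidableEq C] {ρ : Matrix ((A × E) × C) ((A × E) × C) ℂ}

theorem isMarkov_emb₁₃ (hρ : ρ.PosSemidef)
    (hS : entropy ρ + entropy (marginal (embFst A E) (marginal (embFst (A × E) C) ρ)) =
      entropy (marginal (emb₁₃ A E C) ρ) + entropy (marginal (embFst (A × E) C) ρ)) :
    IsMarkov (emb₁₃ A E C) (embFst (A × E) C) (embFst A C) ρ where
  posSemidef := hρ
  marginal_map := by rw [marginal_emb₁₃_embFst, marginal_embFst_marginal_emb₁₃]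
  entropy_add := by rw [marginal_embFst_marginal_emb₁₃, hS]

theorem isMarkov_emb₂₃ (hρ : ρ.PosSemidef)
    (hS : entropy ρ + entropy (marginal (embSnd A E) (marginal (embFst (A × E) C) ρ)) =
      entropy (marginal (emb₂₃ A E C) ρ) + entropy (marginal (embFst (A × E) C) ρ)) :
    IsMarkov (emb₂₃ A E C) (embFst (A × E) C) (embFst E C) ρ where
  posSemidef := hρ
  marginal_map := by rw [marginal_emb₂₃_embFst, marginal_embFst_marginal_emb₂₃]
  entropy_add := by rw [marginal_embFst_marginal_emb₂₃, hS]

section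

variable (hA : IsMarkov (emb₁₃ A E C) (embFst (A × E) C) (embFst A C) ρ)
include hA

theorem emb₁₃_condOp_mul_eq_mul_conjTranspose :
    emb₁₃ A E C (condOp (embFst A C) (marginal (emb₁₃ A E C) ρ)) *
        embFst (A × E) C (marginal (embFst (A × E) C) ρ) =
      embFst (A × E) C (marginal (embFst (A × E) C) ρ) *
        emb₁₃ A E C (condOp (embFst A C) (marginal (emb₁₃ A E C) ρ))ᴴ := by
  have hadj := congrArg conjTranspose hA.map_condOp_mul_map_marginal
  rw [conjTranspose_mul, ← map_conjTranspose, ← map_conjTranspose, hA.posSemidef.isHermitian.eq,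
    (posSemidef_marginal _ hA.posSemidef).isHermitian.eq] at hadj
  rw [hA.map_condOp_mul_map_marginal, hadj]

variable (hE : IsMarkov (emb₂₃ A E C) (embFst (A × E) C) (embFst E C) ρ)
include hE

theorem actsAlike_block_condOp (k l : C) :
    ActsAlike (marginal (embFst (A × E) C) ρ)
      (embFst A E (block (condOp (embFst A C) (marginal (emb₁₃ A E C) ρ)) k l))
      (embSnd A E (block (condOp (embFst E C) (marginal (emb₂₃ A E C) ρ)) k l)) :=
  actsAlike_block (hA.actsAlike hE) k l

theorem commute_block_condOp_marginal (k l : C) :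
    Commute (embFst A E (block (condOp (embFst A C) (marginal (emb₁₃ A E C) ρ)) k l))
      (marginal (embFst (A × E) C) ρ) := by
  have hself := congrArg (block · k l) (emb₁₃_condOp_mul_eq_mul_conjTranspose hA)
  simp only [block_mul_embFst, block_embFst_mul, block_emb₁₃] at hself
  refine (actsAlike_block_condOp hA hE k l).commute_of_mul_eq_mul
    (posSemidef_marginal _ hA.posSemidef) hself ?_
  rw [← map_sub, ← map_conjTranspose]
  exact commute_embFst_embSnd _ _

theorem commute_emb₁₃_condOp :
    Commute (emb₁₃ A E C (condOp (embFst A C) (marginal (emb₁₃ A E C) ρ)))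
      (embFst (A × E) C (marginal (embFst (A × E) C) ρ)) :=
  commute_emb₁₃_embFst_iff.mpr (commute_block_condOp_marginal hA hE)

theorem posSemidef_condOp_emb₁₃ :
    (condOp (embFst A C) (marginal (emb₁₃ A E C) ρ)).PosSemidef := by
  refine posSemidef_condOp _ (posSemidef_marginal _ hA.posSemidef) ?_
  rw [marginal_embFst_marginal_emb₁₃, ← marginal_emb₁₃_embFst, Commute, SemiconjBy,
    ← marginal_map_mul, ← marginal_mul_map, (commute_emb₁₃_condOp hA hE).eq]

theorem commute_block_condOp (k l k' l' : C) :
    Commute (block (condOp (embFst A C) (marginal (emb₁₃ A E C) ρ)) k l)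
      (block (condOp (embFst A C) (marginal (emb₁₃ A E C) ρ)) k' l') := by
  have hρA := (posSemidef_marginal (embFst A E)
    (posSemidef_marginal (embFst (A × E) C) hA.posSemidef)).isHermitian
  have hsupp (k l : C) : block (condOp (embFst A C) (marginal (emb₁₃ A E C) ρ)) k l *
      supportProj (marginal (embFst A E) (marginal (embFst (A × E) C) ρ)) =
        block (condOp (embFst A C) (marginal (emb₁₃ A E C) ρ)) k l := by
    rw [← block_mul_embFst, ← marginal_embFst_marginal_emb₁₃, condOp_mul_map_supportProj_marginal]
  have hmul := (actsAlike_block_condOp hA hE k' l').mul_mul_comm (commute_embFst_embSnd _ _)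
    (commute_block_condOp_marginal hA hE k l)
  rw [← map_mul, ← map_mul] at hmul
  have hmarginal := congrArg (marginal (embFst A E)) hmul
  rw [marginal_map_mul, marginal_map_mul] at hmarginal
  simpa only [mul_assoc, mul_pinv hρA, hsupp, Commute, SemiconjBy] using
    congrArg (· * pinv (marginal (embFst A E) (marginal (embFst (A × E) C) ρ))) hmarginal

end

end CommonEnds

/-! ### Transport along a Markov chain -/

section Transfer

variable {n m n₀ n₁ n₂ : Type*} [Fintype n] [DecidableEq n] [Fintype m] [DecidableEq m]
  [Fintype n₀] [DecidableEq n₀] [Fintype n₁] [DecidableEq n₁] [Fintype n₂] [DecidableEq n₂]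

theorem ActsAlike.of_marginal {ι : Matrix m m ℂ →⋆ₐ[ℂ] Matrix n n ℂ} {ρ : Matrix n n ℂ}
    {X Y : Matrix m m ℂ} (h : ActsAlike (marginal ι ρ) X Y) (hρ : ρ.PosSemidef) :
    ActsAlike ρ (ι X) (ι Y) where
  mul_left := by
    rw [← sub_eq_zero, ← sub_mul, ← map_sub]
    exact map_mul_eq_zero_of_mul_marginal_eq_zero ι hρ (by rw [sub_mul, h.mul_left, sub_self])
  mul_right := by
    rw [← sub_eq_zero, ← mul_sub, ← map_sub]
    exact mul_map_eq_zero_of_marginal_mul_eq_zero ι hρ (by rw [mul_sub, h.mul_right, sub_self])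

theorem ActsAlike.commute_marginal {ι : Matrix m m ℂ →⋆ₐ[ℂ] Matrix n n ℂ} {ρ Y : Matrix n n ℂ}
    {X : Matrix m m ℂ} (h : ActsAlike ρ (ι X) Y) (hY : ∀ Z, Commute Y (ι Z)) :
    Commute X (marginal ι ρ) := by
  rw [Commute, SemiconjBy, ← marginal_map_mul, h.mul_left, marginal_mul_comm ι hY, ← h.mul_right,
    marginal_mul_map]

theorem IsMarkov.map_mul_supportProj_mul {ι₁ : Matrix n₁ n₁ ℂ →⋆ₐ[ℂ] Matrix n n ℂ}
    {ι₂ : Matrix n₂ n₂ ℂ →⋆ₐ[ℂ] Matrix n n ℂ} {j : Matrix n₀ n₀ ℂ →⋆ₐ[ℂ] Matrix n₁ n₁ ℂ}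
    {τ : Matrix n n ℂ} (h : IsMarkov ι₁ ι₂ j τ) {X : Matrix n₁ n₁ ℂ} {Y : Matrix n₂ n₂ ℂ}
    (hXY : ι₁ X * τ = ι₂ Y * τ) (hY : ∀ Z, Commute (ι₂ Y) (ι₁ Z)) :
    ι₁ (X * supportProj (marginal ι₁ τ)) * ι₂ (marginal ι₂ τ) =
      ι₁ (supportProj (marginal ι₁ τ)) * ι₂ (Y * marginal ι₂ τ) := by
  have hsupp : ι₁ X * supportProj τ = ι₂ Y * supportProj τ := by
    rw [← mul_pinv h.posSemidef.isHermitian, ← mul_assoc, hXY, mul_assoc]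
  rw [map_mul, mul_assoc, h.map_supportProj_mul, ← mul_assoc, hsupp, mul_assoc,
    ← h.map_supportProj_mul, ← mul_assoc, (hY _).eq, map_mul, mul_assoc]

variable {A D E : Type*} [Fintype A] [DecidableEq A] [Fintype D] [DecidableEq D]
  [Fintype E] [DecidableEq E] {τ : Matrix ((A × D) × E) ((A × D) × E) ℂ} {α : Matrix A A ℂ}
  {α' : Matrix E E ℂ}

theorem isMarkov_embFst (hτ : τ.PosSemidef)
    (hS : entropy τ + entropy (marginal (embSnd A D) (marginal (embFst (A × D) E) τ)) =
      entropy (marginal (embFst (A × D) E) τ) + entropy (marginal (emb₂₃ A D E) τ)) :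
    IsMarkov (embFst (A × D) E) (emb₂₃ A D E) (embSnd A D) τ where
  posSemidef := hτ
  marginal_map := by rw [marginal_embFst_emb₂₃, marginal_embFst_marginal_emb₂₃]
  entropy_add := hS

theorem ActsAlike.of_marginal_emb₁₃
    (h : ActsAlike (marginal (emb₁₃ A D E) τ) (embFst A E α) (embSnd A E α')) (hτ : τ.PosSemidef) :
    ActsAlike τ (embFst (A × D) E (embFst A D α)) (embSnd (A × D) E α') := by
  rw [← emb₁₃_embFst, ← emb₁₃_embSnd]
  exact h.of_marginal hτ

theorem ActsAlike.commute_marginal_embFst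
    (h : ActsAlike τ (embFst (A × D) E (embFst A D α)) (embSnd (A × D) E α')) :
    Commute (embFst A D α) (marginal (embFst (A × D) E) τ) :=
  h.commute_marginal fun Z => (commute_embFst_embSnd Z α').symm

theorem IsMarkov.embFst_mul_marginal_mul_embSnd
    (hτ : IsMarkov (embFst (A × D) E) (emb₂₃ A D E) (embSnd A D) τ)
    (h : ActsAlike τ (embFst (A × D) E (embFst A D α)) (embSnd (A × D) E α')) :
    embFst A D α * marginal (embFst (A × D) E) τ *
        embSnd A D (marginal (embSnd A D) (marginal (embFst (A × D) E) τ)) =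
      marginal (embFst (A × D) E) τ *
        embSnd A D (marginal (embSnd A D) (embFst A D α * marginal (embFst (A × D) E) τ)) := by
  have hq := (posSemidef_marginal (embFst (A × D) E) hτ.posSemidef).isHermitian
  have hmove : marginal (embFst D E) (embSnd D E α' * marginal (emb₂₃ A D E) τ) =
      marginal (embSnd A D) (embFst A D α * marginal (embFst (A × D) E) τ) := by
    rw [← marginal_map_mul, marginal_embFst_marginal_emb₂₃, emb₂₃_embSnd, ← h.mul_left,
      marginal_map_mul]
  have hsupp := hτ.map_mul_supportProj_mul (X := embFst A D α) (Y := embSnd D E α')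
    (by rw [emb₂₃_embSnd, h.mul_left])
    (fun Z => by rw [emb₂₃_embSnd]; exact (commute_embFst_embSnd Z α').symm)
  have hmarginal := congrArg (marginal (embFst (A × D) E)) hsupp
  rw [marginal_map_mul, marginal_map_mul, marginal_embFst_emb₂₃, marginal_embFst_emb₂₃, hmove,
    marginal_embFst_marginal_emb₂₃] at hmarginal
  have hmul := congrArg (marginal (embFst (A × D) E) τ * ·) hmarginal
  simp only [← mul_assoc] at hmul
  rwa [mul_supportProj_self hq, ← h.commute_marginal_embFst.eq, mul_assoc (embFst A D α),
    mul_supportProj_self hq] at hmul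

end Transfer

section Transport

variable {A D C : Type*} [Fintype A] [DecidableEq A] [Fintype D] [DecidableEq D]
  [Fintype C] [DecidableEq C]

/-- The operator `Tr_A(a q) q_D⁻¹` on `DC` obtained by moving the operator `a` on `AC` across the
bipartite state `q` of `AD`. -/
noncomputable def transport (q : Matrix (A × D) (A × D) ℂ) (a : Matrix (A × C) (A × C) ℂ) :
    Matrix (D × C) (D × C) ℂ :=
  marginal (emb₂₃ A D C) (emb₁₃ A D C a * embFst (A × D) C q) *
    embFst D C (pinv (marginal (embSnd A D) q))

/-- The operator `a` on `AC` commutes with the state `q` of `AD`, and its action on `q` is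
implemented, up to the factor `q_D`, by an operator on `DC`. -/
structure IsTransportable (q : Matrix (A × D) (A × D) ℂ) (a : Matrix (A × C) (A × C) ℂ) :
    Prop where
  commute : Commute (emb₁₃ A D C a) (embFst (A × D) C q)
  mul_marginal : emb₁₃ A D C a * embFst (A × D) C q *
      emb₂₃ A D C (embFst D C (marginal (embSnd A D) q)) =
    embFst (A × D) C q *
      emb₂₃ A D C (marginal (emb₂₃ A D C) (emb₁₃ A D C a * embFst (A × D) C q))

theorem isTransportable_of_block {q : Matrix (A × D) (A × D) ℂ} {a : Matrix (A × C) (A × C) ℂ}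
    (hcomm : ∀ k l, Commute (embFst A D (block a k l)) q)
    (hmul : ∀ k l, embFst A D (block a k l) * q * embSnd A D (marginal (embSnd A D) q) =
      q * embSnd A D (marginal (embSnd A D) (embFst A D (block a k l) * q))) :
    IsTransportable q a where
  commute := commute_emb₁₃_embFst_iff.mpr hcomm
  mul_marginal := ext_block fun k l => by
    rw [emb₂₃_embFst, block_mul_embFst, block_mul_embFst, block_embFst_mul, block_emb₁₃,
      block_emb₂₃, block_marginal_emb₂₃, block_mul_embFst, block_emb₁₃, hmul]

namespace IsTransportable

variable {q : Matrix (A × D) (A × D) ℂ} {a : Matrix (A × C) (A × C) ℂ}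

theorem commute_marginal (h : IsTransportable q a) :
    Commute (embFst D C (marginal (embSnd A D) q))
      (marginal (emb₂₃ A D C) (emb₁₃ A D C a * embFst (A × D) C q)) := by
  have hmarginal := congrArg (marginal (emb₂₃ A D C)) h.mul_marginal
  rw [marginal_mul_map, marginal_mul_map, marginal_emb₂₃_embFst] at hmarginal
  exact hmarginal.symm

variable (h : IsTransportable q a) (hq : q.PosSemidef)
include h hq

theorem commute_transport :
    Commute (transport q a) (embFst D C (marginal (embSnd A D) q)) := by
  have hD := (posSemidef_marginal (embSnd A D) hq).isHermitian
  refine (h.commute_marginal.mul_right ?_).symm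
  rw [map_pinv _ hD]
  exact (commute_cfc (isHermitian_map _ hD) (Commute.refl _) _).symm

theorem mul_emb₂₃_transport :
    embFst (A × D) C q * emb₂₃ A D C (transport q a) =
      emb₁₃ A D C a * embFst (A × D) C q := by
  rw [transport, map_mul, ← mul_assoc, ← h.mul_marginal, emb₂₃_embFst, emb₂₃_embFst, mul_assoc,
    mul_assoc, ← map_mul, ← map_mul, ← map_mul,
    mul_pinv (posSemidef_marginal (embSnd A D) hq).isHermitian,
    mul_map_supportProj_marginal _ hq]

variable (ha : a.PosSemidef)
include ha

theorem posSemidef_transport : (transport q a).PosSemidef :=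
  posSemidef_mul_map_pinv _
    (posSemidef_marginal _
      (posSemidef_mul_of_commute (posSemidef_map _ ha) (posSemidef_map _ hq) h.commute))
    (posSemidef_marginal _ hq) h.commute_marginal

theorem emb₁₃_mul_eq_emb₂₃_transport_mul :
    emb₁₃ A D C a * embFst (A × D) C q =
      emb₂₃ A D C (transport q a) * embFst (A × D) C q := by
  have hadj := congrArg conjTranspose (h.mul_emb₂₃_transport hq)
  rw [conjTranspose_mul, conjTranspose_mul, ← map_conjTranspose, ← map_conjTranspose,
    ← map_conjTranspose, ha.isHermitian.eq, hq.isHermitian.eq,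
    (h.posSemidef_transport hq ha).isHermitian.eq] at hadj
  rw [hadj, h.commute.eq]

theorem transport_mul_embFst_marginal :
    transport q a * embFst D C (marginal (embSnd A D) q) =
      marginal (emb₂₃ A D C) (emb₁₃ A D C a * embFst (A × D) C q) := by
  rw [h.emb₁₃_mul_eq_emb₂₃_transport_mul hq ha, marginal_map_mul, marginal_emb₂₃_embFst]

theorem posSemidef_transport_mul :
    (transport q a * embFst D C (marginal (embSnd A D) q)).PosSemidef := by
  rw [h.transport_mul_embFst_marginal hq ha]
  exact posSemidef_marginal _
    (posSemidef_mul_of_commute (posSemidef_map _ ha) (posSemidef_map _ hq) h.commute)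

theorem trace_transport_mul :
    trace (transport q a * embFst D C (marginal (embSnd A D) q)) =
      trace (a * embFst A C (marginal (embFst A D) q)) := by
  rw [h.transport_mul_embFst_marginal hq ha, trace_marginal, trace_map_mul, marginal_emb₁₃_embFst]

end IsTransportable

end Transport

section FunctionalCalculus

variable {A D C : Type*} [Fintype A] [DecidableEq A] [Fintype D] [DecidableEq D]
  [Fintype C] [DecidableEq C] {a : Matrix (A × C) (A × C) ℂ} {t : Matrix (D × C) (D × C) ℂ}

theorem commute_block_pow (h : ∀ k l i j, Commute (block a k l) (block a i j)) (n : ℕ)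
    (k l i j : C) : Commute (block a k l) (block (a ^ n) i j) := by
  induction n generalizing i j with
  | zero =>
    rw [pow_zero, block_one]
    split_ifs
    · exact Commute.one_right _
    · exact Commute.zero_right _
  | succ n ih =>
    rw [pow_succ, block_mul]
    exact Commute.sum_right _ _ _ fun t _ => (ih _ _).mul_right (h _ _ _ _)

section

variable {q : Matrix (A × D) (A × D) ℂ} (hcomm : ∀ k l i j, Commute (block a k l) (block a i j))
  (h : emb₁₃ A D C a * embFst (A × D) C q = emb₂₃ A D C t * embFst (A × D) C q)
include hcomm h

theorem emb₁₃_pow_mul_eq (n : ℕ) :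
    emb₁₃ A D C (a ^ n) * embFst (A × D) C q = emb₂₃ A D C (t ^ n) * embFst (A × D) C q := by
  rw [emb₁₃_mul_embFst_eq_iff] at h ⊢
  induction n with
  | zero =>
    intro k l
    rw [pow_zero, pow_zero, block_one, block_one]
    split_ifs <;> simp
  | succ n ih =>
    intro k l
    rw [pow_succ', pow_succ', block_mul, block_mul, map_sum, map_sum, Finset.sum_mul,
      Finset.sum_mul]
    refine Finset.sum_congr rfl fun j _ => ?_
    rw [(commute_block_pow hcomm n k j j l).eq, map_mul, mul_assoc, h, ← mul_assoc,
      (commute_embFst_embSnd _ _).eq, mul_assoc, ih, ← mul_assoc, ← map_mul]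

theorem emb₁₃_aeval_mul_eq (F : ℝ[X]) :
    emb₁₃ A D C (aeval a F) * embFst (A × D) C q =
      emb₂₃ A D C (aeval t F) * embFst (A × D) C q := by
  induction F using Polynomial.induction_on' with
  | add F G hF hG => simp only [map_add, add_mul, hF, hG]
  | monomial n c =>
    rw [aeval_monomial, aeval_monomial, ← Algebra.smul_def, ← Algebra.smul_def,
      ← Complex.coe_smul, ← Complex.coe_smul, map_smul, map_smul, smul_mul_assoc, smul_mul_assoc,
      emb₁₃_pow_mul_eq hcomm h]

end

variable {υ : Matrix ((A × D) × C) ((A × D) × C) ℂ}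

theorem trace_marginal_mul_cfc_eq (hυ : υ.PosSemidef) (ha : a.IsHermitian) (ht : t.IsHermitian)
    (hcomm : ∀ k l i j, Commute (block a k l) (block a i j))
    (h : emb₁₃ A D C a * embFst (A × D) C (marginal (embFst (A × D) C) υ) =
      emb₂₃ A D C t * embFst (A × D) C (marginal (embFst (A × D) C) υ)) (f : ℝ → ℝ) :
    trace (marginal (emb₁₃ A D C) υ * cfc f a) = trace (marginal (emb₂₃ A D C) υ * cfc f t) := by
  obtain ⟨F, hFa, hFt⟩ := exists_polynomial_cfc_eq_aeval ha ht f
  rw [hFa, hFt, trace_mul_comm, ← trace_map_mul, trace_mul_comm (marginal _ υ), ← trace_map_mul,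
    mul_eq_mul_of_mul_map_marginal _ hυ (emb₁₃_aeval_mul_eq hcomm h F)]

end FunctionalCalculus

/-! ### The entropy inequality -/

section EntropyInequality

variable {n m m' : Type*} [Fintype n] [DecidableEq n] [Fintype m] [DecidableEq m]
  [Fintype m'] [DecidableEq m']

theorem entropy_map_mul_map (ι : Matrix m m ℂ →⋆ₐ[ℂ] Matrix n n ℂ)
    (κ : Matrix m' m' ℂ →⋆ₐ[ℂ] Matrix n n ℂ) {ρ : Matrix n n ℂ} {a : Matrix m m ℂ}
    {r : Matrix m' m' ℂ} (ha : a.IsHermitian) (hr : r.IsHermitian) (h : Commute (ι a) (κ r))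
    (hρ : ι a * κ r = ρ) :
    entropy ρ = -(trace (marginal ι ρ * cfc Real.log a)).re -
      (trace (marginal κ ρ * cfc Real.log r)).re := by
  have hιa := isHermitian_map ι ha
  have hκr := isHermitian_map κ hr
  have hlog := mul_log_mul (M := ρ) hιa hκr h
    (by rw [← hρ, h.eq, mul_assoc, mul_supportProj_self hιa])
    (by rw [← hρ, mul_assoc, mul_supportProj_self hκr])
  rw [hρ, mul_add, ← map_cfc ι ha, ← map_cfc κ hr] at hlog
  rw [entropy, hlog, trace_add, trace_mul_map, trace_mul_map, Complex.add_re]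
  ring

theorem mul_supportProj_eq_of_trace {M : Matrix n n ℂ} (N : Matrix n n ℂ) (hM : M.PosSemidef)
    (h : trace (M * supportProj N) = trace M) : M * supportProj N = M := by
  have hidem : (1 - supportProj N) * (1 - supportProj N)ᴴ = 1 - supportProj N := by
    have hproj : supportProj N * supportProj N = supportProj N := by
      rw [supportProj, cfc_mul_cfc]
      refine cfc_congr fun x _ => ?_
      by_cases hx : x = 0 <;> simp [hx]
    rw [conjTranspose_sub, conjTranspose_one, (isHermitian_supportProj N).eq, mul_sub, sub_mul,
      sub_mul, hproj]
    simp
  have hzero : M * (1 - supportProj N) = 0 := by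
    refine mul_eq_zero_of_trace_conjTranspose_mul_mul hM ?_
    rw [trace_mul_cycle, hidem, trace_mul_comm, mul_sub, mul_one, trace_sub, h, sub_self]
  rw [mul_sub, mul_one, sub_eq_zero] at hzero
  exact hzero.symm

theorem entropy_sub_entropy_marginal_le (ι : Matrix m m ℂ →⋆ₐ[ℂ] Matrix n n ℂ)
    {M t : Matrix n n ℂ} (hM : M.PosSemidef) (ht : t.IsHermitian)
    (hcomm : Commute t (ι (marginal ι M))) (hpos : (t * ι (marginal ι M)).PosSemidef)
    (htrace : trace (t * ι (marginal ι M)) = trace M) (hsupp : M * supportProj t = M) :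
    entropy M - entropy (marginal ι M) ≤ -(trace (M * cfc Real.log t)).re := by
  have hm := (posSemidef_marginal ι hM).isHermitian
  have hsupp' : M * supportProj (ι (marginal ι M)) = M := by
    rw [← map_supportProj ι hm, mul_map_supportProj_marginal ι hM]
  have hklein := re_trace_sub_re_trace_le_relEntropy hM hpos
    (by rw [supportProj_mul ht (isHermitian_map ι hm) hcomm, ← mul_assoc, hsupp, hsupp'])
  rw [htrace, sub_self, relEntropy, mul_log_mul ht (isHermitian_map ι hm) hcomm hsupp hsupp',
    mul_add, trace_add, Complex.add_re, ← map_cfc ι hm, trace_mul_map] at hklein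
  rw [entropy.eq_def (marginal ι M)]
  linarith

variable {A C D E : Type*} [Fintype A] [DecidableEq A] [Fintype C] [DecidableEq C]
  [Fintype D] [DecidableEq D] [Fintype E] [DecidableEq E]
  {ρ : Matrix ((A × E) × C) ((A × E) × C) ℂ} {τ : Matrix ((A × D) × E) ((A × D) × E) ℂ}
  {υ : Matrix ((A × D) × C) ((A × D) × C) ℂ}

theorem entropy_sub_le_of_isTransportable {a : Matrix (A × C) (A × C) ℂ} (hυ : υ.PosSemidef)
    (ha : a.PosSemidef) (hcomm : ∀ k l i j, Commute (block a k l) (block a i j))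
    (h : IsTransportable (marginal (embFst (A × D) C) υ) a)
    (haυ : a * embFst A C (marginal (embFst A D) (marginal (embFst (A × D) C) υ)) =
      marginal (emb₁₃ A D C) υ) :
    entropy (marginal (emb₂₃ A D C) υ) -
        entropy (marginal (embSnd A D) (marginal (embFst (A × D) C) υ)) ≤
      -(trace (marginal (emb₁₃ A D C) υ * cfc Real.log a)).re := by
  have hq := posSemidef_marginal (embFst (A × D) C) hυ
  have hDC := posSemidef_marginal (emb₂₃ A D C) hυ
  have ht := (h.posSemidef_transport hq ha).isHermitian
  have htrace := trace_marginal_mul_cfc_eq hυ ha.isHermitian ht hcomm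
    (h.emb₁₃_mul_eq_emb₂₃_transport_mul hq ha)
  have hadj := congrArg conjTranspose haυ
  rw [conjTranspose_mul, ← map_conjTranspose, ha.isHermitian.eq,
    (posSemidef_marginal _ hq).isHermitian.eq,
    (posSemidef_marginal (emb₁₃ A D C) hυ).isHermitian.eq] at hadj
  have hsupp : marginal (emb₂₃ A D C) υ * supportProj (transport (marginal (embFst (A × D) C) υ) a)
      = marginal (emb₂₃ A D C) υ := by
    refine mul_supportProj_eq_of_trace _ hDC ?_
    rw [supportProj, ← htrace, ← hadj, mul_assoc, ← supportProj,
      mul_supportProj_self ha.isHermitian, hadj, trace_marginal, trace_marginal]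
  rw [htrace, ← marginal_embFst_marginal_emb₂₃]
  refine entropy_sub_entropy_marginal_le _ hDC ht ?_ ?_ ?_ hsupp <;>
    rw [marginal_embFst_marginal_emb₂₃]
  · exact h.commute_transport hq
  · exact h.posSemidef_transport_mul hq ha
  · rw [h.trace_transport_mul hq ha, haυ, trace_marginal, trace_marginal]

/-- This is the inequality `S(C|D) ≤ S(C|AE)`; the Markov chains are `C - A - E`, `C - E - A` and
`A - D - E`. -/
theorem entropy_sub_entropy_le_of_isMarkov
    (hA : IsMarkov (emb₁₃ A E C) (embFst (A × E) C) (embFst A C) ρ)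
    (hE : IsMarkov (emb₂₃ A E C) (embFst (A × E) C) (embFst E C) ρ)
    (hD : IsMarkov (embFst (A × D) E) (emb₂₃ A D E) (embSnd A D) τ) (hυ : υ.PosSemidef)
    (hAE : marginal (emb₁₃ A D E) τ = marginal (embFst (A × E) C) ρ)
    (hAD : marginal (embFst (A × D) C) υ = marginal (embFst (A × D) E) τ)
    (hAC : marginal (emb₁₃ A D C) υ = marginal (emb₁₃ A E C) ρ) :
    entropy (marginal (emb₂₃ A D C) υ) -
        entropy (marginal (embSnd A D) (marginal (embFst (A × D) E) τ)) ≤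
      entropy ρ - entropy (marginal (embFst (A × E) C) ρ) := by
  have ha := posSemidef_condOp_emb₁₃ hA hE
  have halike (k l : C) := (hAE ▸ actsAlike_block_condOp hA hE k l).of_marginal_emb₁₃ hD.posSemidef
  have htransport := isTransportable_of_block
    (fun k l => (halike k l).commute_marginal_embFst)
    (fun k l => hD.embFst_mul_marginal_mul_embSnd (halike k l))
  have hle := entropy_sub_le_of_isTransportable hυ ha (commute_block_condOp hA hE)
    (hAD ▸ htransport) (by
      rw [← marginal_embFst_marginal_emb₁₃, hAC,
        condOp_mul_map_marginal _ (posSemidef_marginal _ hA.posSemidef)])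
  have hentropy := entropy_map_mul_map _ _ ha.isHermitian
    (posSemidef_marginal _ hA.posSemidef).isHermitian (commute_emb₁₃_condOp hA hE)
    hA.map_condOp_mul_map_marginal
  rw [hAD, hAC] at hle
  rw [hentropy, entropy.eq_def (marginal (embFst (A × E) C) ρ)]
  linarith

end EntropyInequality

/-! ### Purification -/

section Marginals

variable {X Y Z : Type*} [Fintype X] [DecidableEq X] [Fintype Y] [DecidableEq Y]
  [Fintype Z] [DecidableEq Z]

theorem marginal_embFst_apply (M : Matrix (X × Y) (X × Y) ℂ) (x x' : X) :
    marginal (embFst X Y) M x x' = ∑ y, M (x, y) (x', y) :=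
  marginal_factorEmb_apply _ M x x'

theorem marginal_embSnd_apply (M : Matrix (X × Y) (X × Y) ℂ) (y y' : Y) :
    marginal (embSnd X Y) M y y' = ∑ x, M (x, y) (x, y') :=
  marginal_factorEmb_apply _ M y y'

theorem marginal_emb₁₃_apply (M : Matrix ((X × Y) × Z) ((X × Y) × Z) ℂ) (p q : X × Z) :
    marginal (emb₁₃ X Y Z) M p q = ∑ y, M ((p.1, y), p.2) ((q.1, y), q.2) :=
  marginal_factorEmb_apply _ M p q

theorem marginal_emb₂₃_apply (M : Matrix ((X × Y) × Z) ((X × Y) × Z) ℂ) (p q : Y × Z) :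
    marginal (emb₂₃ X Y Z) M p q = ∑ x, M ((x, p.1), p.2) ((x, q.1), q.2) :=
  marginal_factorEmb_apply _ M p q

end Marginals

section PureState

variable {m k : Type*} [Fintype k]

/-- The reduced state on the first tensor factor of the pure state whose amplitudes, with respect to
product bases of the two factors, are the entries of `L`. -/
def reducedState (L : Matrix m k ℂ) : Matrix m m ℂ :=
  L * Lᴴ

theorem reducedState_apply (L : Matrix m k ℂ) (x x' : m) :
    reducedState L x x' = ∑ y, L x y * star (L x' y) :=
  rfl

theorem posSemidef_reducedState [Finite m] (L : Matrix m k ℂ) : (reducedState L).PosSemidef :=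
  posSemidef_self_mul_conjTranspose L

theorem exists_reducedState_eq {M : Matrix k k ℂ} (hM : M.PosSemidef) :
    ∃ L : Matrix k k ℂ, reducedState L = M := by
  classical
  obtain ⟨L, rfl⟩ := CStarAlgebra.nonneg_iff_eq_mul_star_self.mp hM.nonneg
  exact ⟨L, rfl⟩

variable [Fintype m] [DecidableEq m]

theorem entropy_eq_vNEntropy_mul_log_two {M : Matrix m m ℂ} (hM : M.IsHermitian) :
    entropy M = vNEntropy M * Real.log 2 := by
  rw [vNEntropy_eq_entropy_div_log_two hM, div_mul_cancel₀ _ (Real.log_pos one_lt_two).ne']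

variable [DecidableEq k]

theorem vNEntropy_reducedState_transpose (L : Matrix m k ℂ) :
    vNEntropy (reducedState Lᵀ) = vNEntropy (reducedState L) := by
  have hL : reducedState Lᵀ = (Lᴴ * L)ᵀ := by
    rw [transpose_mul]
    rfl
  rw [hL, vNEntropy_transpose (isHermitian_conjTranspose_mul_self L), reducedState,
    vNEntropy_mul_conjTranspose]

theorem entropy_eq_of_complementary (L : Matrix m k ℂ) {M : Matrix m m ℂ} {N : Matrix k k ℂ}
    (hM : M = reducedState L) (hN : N = reducedState Lᵀ) :
    entropy M = vNEntropy N * Real.log 2 := by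
  rw [hN, vNEntropy_reducedState_transpose, hM,
    entropy_eq_vNEntropy_mul_log_two (posSemidef_reducedState L).isHermitian]

end PureState

section Purification

variable {A B C D E : Type*} [Fintype A] [Fintype B] [Fintype C] [Fintype D] [Fintype E]
  (K : Matrix (A × B × C × D) E ℂ)

/-- The amplitudes of the purification `K`, grouped by the parties `AEC` and `BD`. -/
def ampAEC : Matrix ((A × E) × C) (B × D) ℂ :=
  of fun x y => K (x.1.1, y.1, x.2, y.2) x.1.2

/-- The amplitudes of the purification `K`, grouped by the parties `ADE` and `BC`. -/
def ampADE : Matrix ((A × D) × E) (B × C) ℂ :=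
  of fun x y => K (x.1.1, y.1, y.2, x.1.2) x.2

/-- The amplitudes of the purification `K`, grouped by the parties `ADC` and `BE`. -/
def ampADC : Matrix ((A × D) × C) (B × E) ℂ :=
  of fun x y => K (x.1.1, y.1, x.2, x.1.2) y.2

theorem sum_reverse₃ {X Y Z : Type*} [Fintype X] [Fintype Y] [Fintype Z] (f : X → Y → Z → ℂ) :
    ∑ x, ∑ y, ∑ z, f x y z = ∑ z, ∑ y, ∑ x, f x y z := by
  rw [Finset.sum_comm_cycle]
  exact Finset.sum_congr rfl fun _ _ => Finset.sum_comm

theorem marginal_AE_ampADE_eq_ampAEC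
    [DecidableEq A] [DecidableEq C] [DecidableEq D] [DecidableEq E] :
    marginal (emb₁₃ A D E) (reducedState (ampADE K)) =
      marginal (embFst (A × E) C) (reducedState (ampAEC K)) := by
  ext p q
  simp only [marginal_emb₁₃_apply, marginal_embFst_apply, ampADE, ampAEC, reducedState_apply,
    of_apply, Fintype.sum_prod_type]
  exact sum_reverse₃ _

theorem marginal_AD_ampADC_eq_ampADE
    [DecidableEq A] [DecidableEq C] [DecidableEq D] [DecidableEq E] :
    marginal (embFst (A × D) C) (reducedState (ampADC K)) =
      marginal (embFst (A × D) E) (reducedState (ampADE K)) := by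
  ext p q
  simp only [marginal_embFst_apply, ampADC, ampADE, reducedState_apply, of_apply,
    Fintype.sum_prod_type]
  exact sum_reverse₃ _

theorem marginal_AC_ampADC_eq_ampAEC
    [DecidableEq A] [DecidableEq C] [DecidableEq D] [DecidableEq E] :
    marginal (emb₁₃ A D C) (reducedState (ampADC K)) =
      marginal (emb₁₃ A E C) (reducedState (ampAEC K)) := by
  ext p q
  simp only [marginal_emb₁₃_apply, ampADC, ampAEC, reducedState_apply, of_apply,
    Fintype.sum_prod_type]
  exact sum_reverse₃ _

theorem entropy_AC_eq_SAC [DecidableEq A] [DecidableEq C] [DecidableEq E] :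
    entropy (marginal (emb₁₃ A E C) (reducedState (ampAEC K))) =
      SAC (reducedState K) * Real.log 2 := by
  rw [entropy_eq_vNEntropy_mul_log_two
    (posSemidef_marginal _ (posSemidef_reducedState _)).isHermitian, SAC]
  congr 2
  ext p q
  simp only [marginal_emb₁₃_apply, ampAEC, reducedState_apply, of_apply, Fintype.sum_prod_type]
  exact Finset.sum_comm_cycle.symm

theorem entropy_A_eq_SA [DecidableEq A] [DecidableEq C] [DecidableEq E] :
    entropy (marginal (embFst A E) (marginal (embFst (A × E) C) (reducedState (ampAEC K)))) =
      SA (reducedState K) * Real.log 2 := by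
  rw [entropy_eq_vNEntropy_mul_log_two
    (posSemidef_marginal _ (posSemidef_marginal _ (posSemidef_reducedState _))).isHermitian, SA]
  congr 2
  ext p q
  simp only [marginal_embFst_apply, ampAEC, reducedState_apply, of_apply, Fintype.sum_prod_type]
  rw [sum_reverse₃]
  exact Finset.sum_congr rfl fun _ _ => Finset.sum_congr rfl fun _ _ => Finset.sum_comm

theorem entropy_AD_eq_SAD [DecidableEq A] [DecidableEq D] [DecidableEq E] :
    entropy (marginal (embFst (A × D) E) (reducedState (ampADE K))) =
      SAD (reducedState K) * Real.log 2 := by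
  rw [entropy_eq_vNEntropy_mul_log_two
    (posSemidef_marginal _ (posSemidef_reducedState _)).isHermitian, SAD]
  congr 2
  ext p q
  simp only [marginal_embFst_apply, ampADE, reducedState_apply, of_apply, Fintype.sum_prod_type]
  exact Finset.sum_comm_cycle.symm

theorem entropy_D_eq_SD [DecidableEq A] [DecidableEq D] [DecidableEq E] :
    entropy (marginal (embSnd A D) (marginal (embFst (A × D) E) (reducedState (ampADE K)))) =
      SD (reducedState K) * Real.log 2 := by
  rw [entropy_eq_vNEntropy_mul_log_two
    (posSemidef_marginal _ (posSemidef_marginal _ (posSemidef_reducedState _))).isHermitian, SD]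
  congr 2
  ext p q
  simp only [marginal_embSnd_apply, marginal_embFst_apply, ampADE, reducedState_apply, of_apply,
    Fintype.sum_prod_type]
  exact Finset.sum_congr rfl fun _ _ => Finset.sum_comm_cycle.symm

theorem entropy_DC_eq_SCD [DecidableEq A] [DecidableEq C] [DecidableEq D] :
    entropy (marginal (emb₂₃ A D C) (reducedState (ampADC K))) =
      SCD (reducedState K) * Real.log 2 := by
  have hH := (posSemidef_marginal (emb₂₃ A D C) (posSemidef_reducedState (ampADC K))).isHermitian
  rw [entropy_eq_vNEntropy_mul_log_two hH, ← vNEntropy_submatrix (Equiv.prodComm C D) hH, SCD]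
  congr 2
  ext p q
  simp only [submatrix_apply, Equiv.prodComm_apply, Prod.fst_swap, Prod.snd_swap,
    marginal_emb₂₃_apply, ampADC, reducedState_apply, of_apply, Fintype.sum_prod_type]

variable [DecidableEq A] [DecidableEq B] [DecidableEq C] [DecidableEq D] [DecidableEq E]

theorem entropy_AEC_eq_SBD :
    entropy (reducedState (ampAEC K)) = SBD (reducedState K) * Real.log 2 := by
  refine entropy_eq_of_complementary (ampAEC K) ?_ ?_ <;> ext p q
  · rfl
  · simp only [ampAEC, reducedState_apply, transpose_apply, of_apply, Fintype.sum_prod_type]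
    exact Finset.sum_congr rfl fun _ _ => Finset.sum_comm

theorem entropy_ADE_eq_SBC :
    entropy (reducedState (ampADE K)) = SBC (reducedState K) * Real.log 2 := by
  refine entropy_eq_of_complementary (ampADE K) ?_ ?_ <;> ext p q
  · rfl
  · simp only [ampADE, reducedState_apply, transpose_apply, of_apply, Fintype.sum_prod_type]

theorem entropy_AE_eq_SBCD :
    entropy (marginal (embFst (A × E) C) (reducedState (ampAEC K))) =
      SBCD (reducedState K) * Real.log 2 := by
  refine entropy_eq_of_complementary (of fun x y => K (x.1, y) x.2) ?_ ?_ <;> ext p q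
  · simp only [marginal_embFst_apply, ampAEC, reducedState_apply, of_apply, Fintype.sum_prod_type]
    exact Finset.sum_comm
  · simp only [reducedState_apply, transpose_apply, of_apply, Fintype.sum_prod_type]

theorem entropy_EC_eq_SABD :
    entropy (marginal (emb₂₃ A E C) (reducedState (ampAEC K))) =
      SABD (reducedState K) * Real.log 2 := by
  refine entropy_eq_of_complementary (of fun x y => K (y.1, y.2.1, x.2, y.2.2) x.1) ?_ ?_ <;>
    ext p q
  · simp only [marginal_emb₂₃_apply, ampAEC, reducedState_apply, of_apply, Fintype.sum_prod_type]
  · simp only [reducedState_apply, transpose_apply, of_apply, Fintype.sum_prod_type]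
    exact Finset.sum_comm

theorem entropy_E_eq_SABCD :
    entropy (marginal (embSnd A E) (marginal (embFst (A × E) C) (reducedState (ampAEC K)))) =
      SABCD (reducedState K) * Real.log 2 := by
  refine entropy_eq_of_complementary Kᵀ ?_ ?_ <;> ext p q
  · simp only [marginal_embSnd_apply, marginal_embFst_apply, ampAEC, reducedState_apply,
      transpose_apply, of_apply, Fintype.sum_prod_type]
    exact Finset.sum_congr rfl fun _ _ => Finset.sum_comm
  · rfl

theorem entropy_DE_eq_SABC :
    entropy (marginal (emb₂₃ A D E) (reducedState (ampADE K))) =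
      SABC (reducedState K) * Real.log 2 := by
  refine entropy_eq_of_complementary (of fun x y => K (y.1, y.2.1, y.2.2, x.1) x.2) ?_ ?_ <;>
    ext p q
  · simp only [marginal_emb₂₃_apply, ampADE, reducedState_apply, of_apply, Fintype.sum_prod_type]
  · simp only [reducedState_apply, transpose_apply, of_apply, Fintype.sum_prod_type]

end Purification

end QuantumInfo

open QuantumInfo

/-- **Theorem 1″ (2).** If `S(C|A)+S(C|BD) = 0`, `I(A;C|BD) = 0` and
`S(A|D)+S(A|BC) = 0`, then `S(C|D) + S(C|BD) ≤ 0`. -/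
theorem constrained_inequality''_two
    {A B C D : Type*} [Fintype A] [DecidableEq A] [Fintype B] [DecidableEq B]
    [Fintype C] [DecidableEq C] [Fintype D] [DecidableEq D]
    (ρ : Matrix (A × B × C × D) (A × B × C × D) ℂ) (hρ : IsState ρ)
    (h1 : (SAC ρ - SA ρ) + (SBCD ρ - SBD ρ) = 0)
    (h2 : SABD ρ + SBCD ρ - SABCD ρ - SBD ρ = 0)
    (h3 : (SAD ρ - SD ρ) + (SABC ρ - SBC ρ) = 0) :
    (SCD ρ - SD ρ) + (SBCD ρ - SBD ρ) ≤ 0 := by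
  obtain ⟨K, rfl⟩ := exists_reducedState_eq hρ.1
  have hA := isMarkov_emb₁₃ (posSemidef_reducedState (ampAEC K)) <| by
    rw [entropy_AEC_eq_SBD, entropy_A_eq_SA, entropy_AC_eq_SAC, entropy_AE_eq_SBCD]
    linear_combination (-Real.log 2) * h1
  have hE := isMarkov_emb₂₃ (posSemidef_reducedState (ampAEC K)) <| by
    rw [entropy_AEC_eq_SBD, entropy_E_eq_SABCD, entropy_EC_eq_SABD, entropy_AE_eq_SBCD]
    linear_combination (-Real.log 2) * h2
  have hD := isMarkov_embFst (posSemidef_reducedState (ampADE K)) <| by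
    rw [entropy_ADE_eq_SBC, entropy_D_eq_SD, entropy_AD_eq_SAD, entropy_DE_eq_SABC]
    linear_combination (-Real.log 2) * h3
  have hle := entropy_sub_entropy_le_of_isMarkov hA hE hD (posSemidef_reducedState (ampADC K))
    (marginal_AE_ampADE_eq_ampAEC K) (marginal_AD_ampADC_eq_ampADE K)
    (marginal_AC_ampADC_eq_ampAEC K)
  rw [entropy_DC_eq_SCD, entropy_D_eq_SD, entropy_AEC_eq_SBD, entropy_AE_eq_SBCD] at hle
  exact nonpos_of_mul_nonpos_left (by linarith) (Real.log_pos one_lt_two)
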